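/- arXiv:1405.4037 — 2 statements merged into one kernel-verified Lean document; each statement's English description precedes it below -/
import Mathlib

section
/- Let p be an odd prime, k a field of characteristic 0, G a finite p-group, K/k a field extension, and ρ : G → GL_n(K) a K-irreducible representation whose character takes all its values in k. Then ρ descends to an intermediate field k ⊆ K₀ ⊆ K that is algebraic over k (i.e., of transcendence degree 0 over k); in other words, ed(ρ) = 0. -/
open Matrix

/-- The character of a matrix representation. -/
noncomputable def repChar {G K : Type*} [Group G] [Field K] {n : ℕ}
    (ρ : G →* GL (Fin n) K) (g : G) : K :=
  Matrix.trace (ρ g : Matrix (Fin n) (Fin n) K)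

/-- A matrix representation is irreducible (over the base field) if it is nonzero and the
only invariant subspaces are `⊥` and `⊤`. -/
def IsIrreducibleRep {K : Type*} [Field K] {G : Type*} [Group G] {n : ℕ}
    (ρ : G →* GL (Fin n) K) : Prop :=
  0 < n ∧ ∀ W : Submodule K (Fin n → K),
    (∀ g : G, ∀ v ∈ W, (ρ g : Matrix (Fin n) (Fin n) K).mulVec v ∈ W) → W = ⊥ ∨ W = ⊤

/-- A representation `ρ : G → GL_n(K)` descends to an intermediate field `K₀` of `K/k` if
it is `K`-equivalent (conjugate) to the base change of some representation over `K₀`. -/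
def Descends {k K : Type*} [Field k] [Field K] [Algebra k K] {G : Type*} [Group G] {n : ℕ}
    (ρ : G →* GL (Fin n) K) (K₀ : IntermediateField k K) : Prop :=
  ∃ ρ' : G →* GL (Fin n) K₀, ∃ M : GL (Fin n) K,
    ∀ g, ρ g = M * Units.map ((algebraMap K₀ K).mapMatrix).toMonoidHom (ρ' g) * M⁻¹


lemma aux_commute_pow {G : Type*} [Group G] (x u d : G) (h : x * u = d * u * x)
    (hx : d * x = x * d) (hu : d * u = u * d) (m : ℕ) :
    (u * x) ^ m = d ^ (m * (m - 1) / 2) * u ^ m * x ^ m := by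
  have hd : ∀ i m : ℕ, Commute (d ^ i) (u ^ m) := fun i m => (show Commute d u from hu).pow_pow i m
  have hdx : ∀ i m : ℕ, Commute (d ^ i) (x ^ m) := fun i m => (show Commute d x from hx).pow_pow i m
  have h2 : ∀ m : ℕ, x ^ m * u = d ^ m * u * x ^ m := by
    intro m
    induction m with
    | zero => simp
    | succ m ih =>
      have h1 := (hdx m 1).eq
      rw [pow_one] at h1
      calc x ^ (m+1) * u = x * (x ^ m * u) := by rw [pow_succ']; group
        _ = (x * d ^ m) * u * x ^ m := by rw [ih]; group
        _ = d ^ m * (x * u) * x ^ m := by rw [← h1]; group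
        _ = d ^ (m+1) * u * x ^ (m+1) := by rw [h, pow_succ, pow_succ']; group
  induction m with
  | zero => simp
  | succ m ih =>
    have e : (m + 1) * (m + 1 - 1) / 2 = m * (m - 1) / 2 + m := Nat.triangle_succ m
    have h3 := (hd m m).eq
    rw [pow_succ, ih]
    calc d ^ (m * (m - 1) / 2) * u ^ m * x ^ m * (u * x)
      _ = d ^ (m * (m - 1) / 2) * u ^ m * (x ^ m * u) * x := by group
      _ = d ^ (m * (m - 1) / 2) * (u ^ m * d ^ m) * u * x ^ m * x := by rw [h2]; group
      _ = (d ^ (m * (m - 1) / 2) * d ^ m) * (u ^ m * u) * (x ^ m * x) := by rw [← h3]; group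
      _ = _ := by rw [← pow_add, ← pow_succ, ← pow_succ, e]

lemma aux_lte {p : ℕ} (hp : p.Prime) (hodd : p ≠ 2) (n : ℕ) (hn : n ≠ 0) (r : ℤ)
    (h : (p : ℤ) ^ n ∣ r ^ p - 1) : (p : ℤ) ∣ r - 1 ∧ (p : ℤ) ^ n ∣ p * (r - 1) := by
  have := Fact.mk hp
  have h1 : (p : ℤ) ∣ r - 1 := by
    have h2 : (p : ℤ) ∣ r ^ p - 1 := (dvd_pow_self _ hn).trans h
    rw [← ZMod.intCast_zmod_eq_zero_iff_dvd] at h2 ⊢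
    simpa using h2
  refine ⟨h1, ?_⟩
  have hr : ¬ (p : ℤ) ∣ r := by
    intro h3
    have := dvd_sub h3 h1
    simp at this
    exact hp.one_lt.ne' (by exact_mod_cast Int.eq_one_of_dvd_one (by positivity) this)
  have := Int.emultiplicity_pow_sub_pow hp (hp.odd_of_ne_two hodd) (x := r) (y := 1) h1 hr p
  rw [one_pow] at this
  rw [pow_dvd_iff_le_emultiplicity] at h ⊢
  rw [this] at h
  rw [emultiplicity_mul (Nat.prime_iff_prime_int.mp hp), add_comm]
  rwa [Int.natCast_emultiplicity] 

lemma aux_sup {G : Type*} [Group G] (A : Subgroup G) (hA : A.Normal)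
    (hc : ∀ x ∈ A, ∀ y ∈ A, x * y = y * x) (x : G) (hx : ∀ a ∈ A, x * a = a * x)
    (hg : ∀ g, g * x * g⁻¹ * x⁻¹ ∈ A) :
    (A ⊔ Subgroup.zpowers x).Normal ∧
      ∀ u ∈ A ⊔ Subgroup.zpowers x, ∀ v ∈ A ⊔ Subgroup.zpowers x, u * v = v * u := by
  have hx' : x ∈ A ⊔ Subgroup.zpowers x :=
    (le_sup_right : _ ≤ A ⊔ Subgroup.zpowers x) (Subgroup.mem_zpowers x)
  have hA' : ∀ a ∈ A, a ∈ A ⊔ Subgroup.zpowers x := fun a ha =>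
    (le_sup_left : _ ≤ A ⊔ Subgroup.zpowers x) ha
  constructor
  · constructor
    intro u hu g
    rw [Subgroup.mem_sup_of_normal_left] at hu
    obtain ⟨a, ha, z, hz, rfl⟩ := hu
    obtain ⟨i, rfl⟩ := hz
    have : g * (a * x ^ i) * g⁻¹ = (g * a * g⁻¹) * (g * x * g⁻¹) ^ i := by
      rw [conj_zpow]; group
    simp only
    rw [this]
    refine mul_mem (hA' _ (hA.conj_mem _ ha _)) (zpow_mem ?_ _)
    have := mul_mem (hA' _ (hg g)) hx'
    simpa using this
  · intro u hu v hv
    rw [Subgroup.mem_sup_of_normal_left] at hu hv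
    obtain ⟨a, ha, z, hz, rfl⟩ := hu
    obtain ⟨i, rfl⟩ := hz
    obtain ⟨b, hb, z, hz, rfl⟩ := hv
    obtain ⟨j, rfl⟩ := hz
    have e1 : Commute a b := hc a ha b hb
    have e2 : Commute a (x ^ j) := (show Commute x a from hx a ha).symm.zpow_right j
    have e3 : Commute (x ^ i) b := (show Commute x b from hx b hb).zpow_left i
    have e4 : Commute (x ^ i) (x ^ j) := (Commute.refl x).zpow_zpow i j
    exact ((e1.mul_right e2).mul_left (e3.mul_right e4))

lemma pgroup_cyclic {p : ℕ} (hp : p.Prime) (hodd : p ≠ 2) {G : Type*} [Group G] [Finite G]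
    (hG : IsPGroup p G)
    (h : ∀ A : Subgroup G, A.Normal → (∀ x ∈ A, ∀ y ∈ A, x * y = y * x) → IsCyclic A) :
    IsCyclic G := by
  have := Fact.mk hp
  obtain ⟨A, ⟨hAn, hAc⟩, hmax⟩ := (Set.toFinite {A : Subgroup G | A.Normal ∧
    (∀ x ∈ A, ∀ y ∈ A, x * y = y * x)}).exists_maximal
      ⟨⊥, inferInstance, by simp⟩
  by_cases hT : A = ⊤
  · have := h A hAn hAc
    subst hT
    exact isCyclic_of_surjective (Subgroup.topEquiv : (⊤ : Subgroup G) ≃* G)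
      (Subgroup.topEquiv : (⊤ : Subgroup G) ≃* G).surjective
  exfalso
  -- element x
  obtain ⟨x, hxA, hxp, hxg⟩ : ∃ x : G, x ∉ A ∧ x ^ p ∈ A ∧ ∀ g, g * x * g⁻¹ * x⁻¹ ∈ A := by
    have hQ : IsPGroup p (G ⧸ A) := hG.to_quotient A
    have : Nontrivial (G ⧸ A) := by
      rw [QuotientGroup.nontrivial_iff]; exact hT
    have hc := hQ.center_nontrivial
    have hcp : IsPGroup p (Subgroup.center (G ⧸ A)) := hQ.to_subgroup _
    have hdvd : p ∣ Nat.card (Subgroup.center (G ⧸ A)) := by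
      obtain ⟨m, hm, h2⟩ := hcp.nontrivial_iff_card.mp hc
      rw [h2]; exact dvd_pow_self _ (by omega)
    obtain ⟨z, hz⟩ := exists_prime_orderOf_dvd_card' p hdvd
    obtain ⟨x, hx⟩ := QuotientGroup.mk_surjective (z : G ⧸ A)
    have hzc := Subgroup.mem_center_iff.mp z.2
    refine ⟨x, ?_, ?_, ?_⟩
    · intro hxA
      have h1 : (z : G ⧸ A) = 1 := by rw [← hx]; exact (QuotientGroup.eq_one_iff x).mpr hxA
      have : z = 1 := Subtype.ext h1
      rw [this, orderOf_one] at hz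
      exact hp.one_lt.ne hz
    · rw [← QuotientGroup.eq_one_iff, QuotientGroup.mk_pow, hx]
      have := pow_orderOf_eq_one z
      rw [hz] at this
      exact_mod_cast congrArg Subtype.val this
    · intro g
      rw [← QuotientGroup.eq_one_iff]
      have := hzc (g : G ⧸ A)
      rw [← hx] at this
      simp only [QuotientGroup.mk_mul, QuotientGroup.mk_inv]
      rw [this]; group
  have hAcyc := h A hAn hAc
  obtain ⟨⟨a, haA⟩, ha⟩ := hAcyc.exists_generator
  have haz : ∀ b ∈ A, ∃ i : ℤ, a ^ i = b := by
    intro b hb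
    obtain ⟨i, hi⟩ := ha ⟨b, hb⟩
    exact ⟨i, by simpa using congrArg Subtype.val hi⟩
  have hxa : x * a ≠ a * x := by
    intro hcom
    have h1 : ∀ b ∈ A, x * b = b * x := by
      intro b hb
      obtain ⟨i, rfl⟩ := haz b hb
      exact (show Commute x a from hcom).zpow_right i
    have h2 := aux_sup A hAn hAc x h1 hxg
    have h3 := hmax (y := A ⊔ Subgroup.zpowers x) h2 le_sup_left
    exact hxA (h3 ((le_sup_right : _ ≤ A ⊔ Subgroup.zpowers x) (Subgroup.mem_zpowers x)))
  obtain ⟨r, hr⟩ := haz _ (hAn.conj_mem a haA x)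
  obtain ⟨n, hn⟩ : ∃ n, orderOf a = p ^ n := hG.exists_orderOf_eq_pow a |>.imp fun _ h => h
  have hn0 : n ≠ 0 := by
    rintro rfl
    rw [pow_zero, orderOf_eq_one_iff] at hn
    apply hxa; simp [hn]
  have hord : ∀ i : ℤ, a ^ i = 1 ↔ (p : ℤ) ^ n ∣ i := by
    intro i
    rw [← orderOf_dvd_iff_zpow_eq_one, hn]; push_cast; rfl
  have hconj : ∀ i : ℤ, x * a ^ i * x⁻¹ = a ^ (r * i) := by
    intro i; rw [_root_.zpow_mul, hr, conj_zpow]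
  have hconjm : ∀ m : ℕ, x ^ m * a * (x ^ m)⁻¹ = a ^ (r ^ m) := by
    intro m
    induction m with
    | zero => simp
    | succ m ih =>
      rw [pow_succ' r, ← hconj, ← ih]; rw [pow_succ']; group
  have hrp : (p : ℤ) ^ n ∣ r ^ p - 1 := by
    rw [← hord, _root_.zpow_sub, ← hconjm, hAc _ hxp _ haA]; simp
  obtain ⟨hr1, hr2⟩ := aux_lte hp hodd n hn0 r hrp
  -- p-th powers
  have hpow : ∀ u ∈ A, (u * x) ^ p = u ^ p * x ^ p := by
    intro u hu
    obtain ⟨i, rfl⟩ := haz u hu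
    have e1 : x * a ^ i = a ^ ((r - 1) * i) * a ^ i * x := by
      rw [← _root_.zpow_add, show (r - 1) * i + i = r * i by ring, ← hconj]; group
    have e2 : a ^ ((r - 1) * i) * x = x * a ^ ((r - 1) * i) := by
      have h3 : a ^ ((r - 1) * ((r - 1) * i)) = 1 := by
        rw [hord]
        obtain ⟨s, hs⟩ := hr1
        exact hr2.trans ⟨s * i, by rw [hs]; ring⟩
      have h4 : a ^ (r * ((r - 1) * i)) = a ^ ((r - 1) * i) := by
        rw [show r * ((r - 1) * i) = (r - 1) * ((r - 1) * i) + (r - 1) * i by ring, _root_.zpow_add, h3,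
          one_mul]
      rw [← hconj] at h4
      calc _ = (x * a ^ ((r - 1) * i) * x⁻¹) * x := by rw [h4]
        _ = _ := by group
    rw [aux_commute_pow x (a ^ i) (a ^ ((r - 1) * i)) e1 e2 ((Commute.refl a).zpow_zpow _ _)]
    have h5 : (a ^ ((r - 1) * i)) ^ (p * (p - 1) / 2) = 1 := by
      obtain ⟨q, hq⟩ := hp.odd_of_ne_two hodd
      have : p * (p - 1) / 2 = p * q := by
        rw [show p - 1 = 2 * q by omega, show p * (2 * q) = 2 * (p * q) by ring]
        simp
      rw [this, ← zpow_natCast, ← _root_.zpow_mul, hord]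
      exact hr2.trans ⟨i * q, by push_cast; ring⟩
    rw [h5, one_mul]
  -- x ^ p is a p-th power
  obtain ⟨t, ht⟩ := haz _ hxp
  have hpt : (p : ℤ) ∣ t := by
    by_contra hcon
    have hcop : IsCoprime ((p : ℤ) ^ n) t :=
      IsCoprime.pow_left ((Nat.prime_iff_prime_int.mp hp).coprime_iff_not_dvd.mpr hcon)
    obtain ⟨c, d, hcd⟩ := hcop
    apply hxa
    have : a = (x ^ p) ^ d := by
      rw [← ht, ← _root_.zpow_mul]
      have h6 : a ^ (c * (p : ℤ) ^ n) = 1 := by rw [hord]; exact Dvd.intro_left _ rfl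
      calc a = a ^ (c * (p : ℤ) ^ n + d * t) := by rw [hcd, zpow_one]
        _ = _ := by rw [_root_.zpow_add, h6, one_mul, mul_comm]
    rw [this]
    exact ((Commute.refl x).pow_right p).zpow_right d
  obtain ⟨s, rfl⟩ := hpt
  set u : G := a ^ (-s) with hu
  have huA : u ∈ A := zpow_mem haA _
  set y : G := u * x with hy
  have hyp : y ^ p = 1 := by
    rw [hy, hpow u huA, ← ht, hu, ← zpow_natCast, ← _root_.zpow_mul, ← _root_.zpow_add]
    simp [mul_comm]
  have hyA : y ∉ A := fun hcon => hxA (by simpa [hy] using mul_mem (inv_mem huA) hcon)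
  have hyg : ∀ g, g * y * g⁻¹ * y⁻¹ ∈ A := by
    intro g
    have : g * y * g⁻¹ * y⁻¹ = (g * u * g⁻¹) * (g * x * g⁻¹ * x⁻¹) * u⁻¹ := by rw [hy]; group
    rw [this]
    exact mul_mem (mul_mem (hAn.conj_mem _ huA _) (hxg g)) (inv_mem huA)
  -- the subgroup Z0
  let Z0 : Subgroup G :=
    { carrier := {z | z ∈ A ∧ z ^ p = 1}
      one_mem' := ⟨one_mem _, one_pow _⟩
      mul_mem' := by
        rintro z w ⟨hz, hz'⟩ ⟨hw, hw'⟩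
        refine ⟨mul_mem hz hw, ?_⟩
        rw [(show Commute z w from hAc z hz w hw).mul_pow, hz', hw', one_mul]
      inv_mem' := by
        rintro z ⟨hz, hz'⟩
        exact ⟨inv_mem hz, by rw [inv_pow, hz', inv_one]⟩ }
  have hZ0n : Z0.Normal := ⟨by
    rintro z ⟨hz, hz'⟩ g
    exact ⟨hAn.conj_mem _ hz _, by rw [conj_pow, hz']; simp⟩⟩
  have hyZ : ∀ z ∈ Z0, y * z = z * y := by
    rintro z ⟨hz, hz'⟩
    obtain ⟨i, rfl⟩ := haz z hz
    rw [← zpow_natCast, ← _root_.zpow_mul, hord] at hz'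
    have h7 : a ^ (r * i) = a ^ i := by
      rw [show r * i = (r - 1) * i + i by ring, _root_.zpow_add, (hord _).mpr, one_mul]
      obtain ⟨s, hs⟩ := hr1
      exact hz'.trans ⟨s, by rw [hs]; ring⟩
    rw [← hconj] at h7
    have h8 : Commute x (a ^ i) := by
      change _ = _
      calc x * a ^ i = (x * a ^ i * x⁻¹) * x := by group
        _ = _ := by rw [h7]
    exact Commute.mul_left ((Commute.refl a).zpow_zpow _ _) h8
  have hyZ2 : ∀ g, g * y * g⁻¹ * y⁻¹ ∈ Z0 := by
    intro g
    refine ⟨hyg g, ?_⟩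
    set w := g * y * g⁻¹ * y⁻¹ with hw
    have h9 : (w * u * x) ^ p = 1 := by
      have : w * u * x = g * y * g⁻¹ := by rw [hw, hy]; group
      rw [this, conj_pow, hyp]; simp
    rw [hpow _ (mul_mem (hyg g) huA), (show Commute w u from hAc _ (hyg g) _ huA).mul_pow,
      mul_assoc, ← hpow u huA, ← hy, hyp, mul_one] at h9
    exact h9
  obtain ⟨hEn, hEc⟩ := aux_sup Z0 hZ0n (fun v hv w hw => hAc v hv.1 w hw.1) y hyZ hyZ2
  have hEcyc := h _ hEn hEc
  set E := Z0 ⊔ Subgroup.zpowers y with hE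
  have hEexp : ∀ e : E, e ^ p = 1 := by
    rintro ⟨e, he⟩
    apply Subtype.ext
    change e ^ p = 1
    rw [hE, Subgroup.mem_sup_of_normal_left] at he
    obtain ⟨z, hz, w, ⟨j, rfl⟩, rfl⟩ := he
    have : Commute z (y ^ j) := (show Commute y z from hyZ z hz).symm.zpow_right j
    simp only
    rw [this.mul_pow, hz.2, one_mul, ← zpow_natCast, ← _root_.zpow_mul, mul_comm, _root_.zpow_mul, zpow_natCast,
      hyp, _root_.one_zpow]
  have hEcard : Nat.card E ≤ p := by
    rw [← IsCyclic.exponent_eq_card]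
    exact Nat.le_of_dvd hp.pos (Monoid.exponent_dvd_of_forall_pow_eq_one hEexp)
  -- element of order p in Z0
  obtain ⟨z, hz⟩ : ∃ z : A, orderOf z = p := by
    apply exists_prime_orderOf_dvd_card' p
    have : orderOf (⟨a, haA⟩ : A) ∣ Nat.card A := orderOf_dvd_natCard _
    rw [Subgroup.orderOf_mk, hn] at this
    exact (dvd_pow_self _ hn0).trans this
  have hzZ : (z : G) ∈ Z0 := ⟨z.2, by
    have := pow_orderOf_eq_one z
    rw [hz] at this
    exact_mod_cast congrArg Subtype.val this⟩
  have hle : Subgroup.zpowers (z : G) ≤ E := by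
    rw [Subgroup.zpowers_le]
    exact (le_sup_left : Z0 ≤ E) hzZ
  have heq := Subgroup.eq_of_le_of_card_ge hle (by
    rw [Nat.card_zpowers, Subgroup.orderOf_coe, hz]; exact hEcard)
  have hyE : y ∈ E := (le_sup_right : _ ≤ E) (Subgroup.mem_zpowers y)
  rw [← heq] at hyE
  exact hyA ((Subgroup.zpowers_le.mpr z.2) hyE)

section helpers

universe u v

open Module Polynomial

/-- Irreducibility for linear representations. -/
def RepIrr {K G V : Type*} [Field K] [Group G] [AddCommGroup V] [Module K V]
    (ρ : Representation K G V) : Prop :=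
  Nontrivial V ∧ ∀ W : Submodule K V, (∀ g, ∀ v ∈ W, ρ g v ∈ W) → W = ⊥ ∨ W = ⊤

/-- A representation has a form over `F`. -/
def HasForm {k K G V : Type*} [Field k] [Field K] [Algebra k K] [Group G] [AddCommGroup V]
    [Module K V] (F : IntermediateField k K) (ρ : Representation K G V) : Prop :=
  ∃ (n : ℕ) (b : Basis (Fin n) K V), ∀ g i, ρ g (b i) ∈ Submodule.span F (Set.range b)

lemma HasForm.of_basis {k K G V ι : Type*} [Field k] [Field K] [Algebra k K] [Group G]
    [AddCommGroup V] [Module K V] [Finite ι] (F : IntermediateField k K) (ρ : Representation K G V)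
    (b : Basis ι K V) (h : ∀ g i, ρ g (b i) ∈ Submodule.span F (Set.range b)) : HasForm F ρ := by
  obtain ⟨n, ⟨e⟩⟩ := Finite.exists_equiv_fin ι
  refine ⟨n, b.reindex e, fun g i => ?_⟩
  rw [Basis.range_reindex, Basis.reindex_apply]
  exact h _ _

lemma hasForm_cyclic {k K G V : Type*} [Field k] [Field K] [Algebra k K] [Group G] [Finite G]
    [IsCyclic G] [AddCommGroup V] [Module K V] (ρ : Representation K G V) (hirr : RepIrr ρ) :
    HasForm (algebraicClosure k K) ρ := by
  classical
  obtain ⟨z, hz⟩ := IsCyclic.exists_monoid_generator (α := G)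
  obtain ⟨hnt, hirr⟩ := hirr
  obtain ⟨v, hv⟩ := exists_ne (0 : V)
  set T : Module.End K V := ρ z with hT
  let I : Ideal K[X] :=
    { carrier := {f | aeval T f v = 0}
      zero_mem' := by simp
      add_mem' := by intro f g hf hg; simp_all
      smul_mem' := by intro f g hg; simp_all }
  have hI : ∀ f, f ∈ I ↔ aeval T f v = 0 := fun f => Iff.rfl
  set N := Nat.card G
  have hN : 0 < N := Nat.card_pos
  have hXN : (X ^ N - 1 : K[X]) ∈ I := by
    rw [hI]
    have : T ^ N = 1 := by rw [hT, ← map_pow, pow_card_eq_one', map_one]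
    simp [this]
  have hXN0 : (X ^ N - 1 : K[X]) ≠ 0 := (monic_X_pow_sub_C (1 : K) hN.ne').ne_zero
  obtain ⟨q, hqm, hq⟩ : ∃ q : K[X], q.Monic ∧ ∀ f, f ∈ I ↔ q ∣ f := by
    obtain ⟨q0, hq0⟩ := (IsPrincipalIdealRing.principal I).principal
    have hq0' : ∀ f, f ∈ I ↔ q0 ∣ f := fun f => by
      rw [hq0]; exact Ideal.mem_span_singleton
    have hne : q0 ≠ 0 := by
      rintro rfl
      exact hXN0 (zero_dvd_iff.mp ((hq0' _).mp hXN))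
    exact ⟨normalize q0, monic_normalize hne, fun f => by rw [hq0', normalize_dvd_iff]⟩
  set d := q.natDegree
  have hcoeff : ∀ i, q.coeff i ∈ algebraicClosure k K := by
    have hm : (X ^ N - 1 : k[X]).Monic := monic_X_pow_sub_C (1 : k) hN.ne'
    have := integralClosure.mem_lifts_of_monic_of_dvd_map K hm hqm (by
      simpa using (hq _).mp hXN)
    intro i
    rw [Polynomial.lifts_iff_coeff_lifts] at this
    obtain ⟨y, hy⟩ := this i
    rw [mem_algebraicClosure_iff', ← hy]
    exact y.2
  set w : Fin d → V := fun i => (T ^ (i : ℕ)) v with hw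
  have hli : LinearIndependent K w := by
    rw [Fintype.linearIndependent_iff]
    intro g hg i
    set f : K[X] := ∑ i : Fin d, C (g i) * X ^ (i : ℕ) with hf
    have hfI : f ∈ I := by
      rw [hI, hf, map_sum, LinearMap.sum_apply, ← hg]
      exact Finset.sum_congr rfl fun i _ => by simp [hw]
    have hdeg : f.degree < q.degree := by
      rw [degree_eq_natDegree hqm.ne_zero]
      exact degree_sum_fin_lt _
    have hf0 := eq_zero_of_dvd_of_degree_lt ((hq _).mp hfI) hdeg
    have := congrArg (fun f => coeff f i) hf0
    simpa [hf, finsetSum_coeff, coeff_X_pow, Fin.val_inj] using this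
  have hspan : ∀ m : ℕ, (T ^ m) v ∈ Submodule.span (algebraicClosure k K) (Set.range w) := by
    intro m
    induction m using Nat.strong_induction_on with
    | _ m ih =>
      by_cases hm : m < d
      · exact Submodule.subset_span ⟨⟨m, hm⟩, rfl⟩
      · push Not at hm
        have h1 : aeval T q v = 0 := (hI q).mp ((hq q).mpr dvd_rfl)
        rw [hqm.as_sum] at h1
        have h2 : (T ^ d) v = - ∑ i ∈ Finset.range d, q.coeff i • (T ^ i) v := by
          rw [eq_neg_iff_add_eq_zero, ← h1]
          simp [d]
        have h3 : (T ^ m) v = - ∑ i ∈ Finset.range d, q.coeff i • (T ^ (m - d + i)) v := by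
          conv_lhs => rw [← Nat.sub_add_cancel hm, pow_add, Module.End.mul_apply, h2]
          simp [pow_add]
        rw [h3]
        refine neg_mem (sum_mem fun i hi => ?_)
        have hi' := Finset.mem_range.mp hi
        exact Submodule.smul_mem _ (⟨q.coeff i, hcoeff i⟩ : algebraicClosure k K)
          (ih (m - d + i) (by omega))
  have hspanK : ∀ m : ℕ, (T ^ m) v ∈ Submodule.span K (Set.range w) := fun m =>
    Submodule.span_subset_span (algebraicClosure k K) K _ (hspan m)
  have htop : ⊤ ≤ Submodule.span K (Set.range w) := by
    have hinv : ∀ g, ∀ u ∈ Submodule.span K (Set.range w), ρ g u ∈ Submodule.span K (Set.range w) := by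
      intro g u hu
      obtain ⟨m, rfl⟩ := hz g
      induction hu using Submodule.span_induction with
      | mem x hx =>
        obtain ⟨i, rfl⟩ := hx
        have := hspanK (m + i)
        simpa [hw, pow_add] using this
      | zero => simp
      | add x y _ _ hx hy => rw [map_add]; exact add_mem hx hy
      | smul c x _ hx => rw [map_smul]; exact Submodule.smul_mem _ _ hx
    rcases hirr (Submodule.span K (Set.range w)) hinv with h | h
    · exfalso
      have := hspanK 0
      rw [h] at this
      exact hv (by simpa using this)
    · exact h.ge
  refine HasForm.of_basis _ ρ (Basis.mk hli htop) fun g i => ?_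
  obtain ⟨m, rfl⟩ := hz g
  rw [Basis.coe_mk]
  have := hspan (m + i)
  simpa [hw, pow_add] using this

lemma indep_of_max {K R V ι : Type*} [Field K] [CommRing R] [AddCommGroup V] [Module K V]
    [Finite ι] (φ : R →+* Module.End K V) (J : ι → Ideal R) (hJ : ∀ i, (J i).IsMaximal)
    (W : ι → Submodule K V) (hW : ∀ i v, v ∈ W i ↔ ∀ r ∈ J i, φ r v = 0)
    (hinj : Function.Injective W) : iSupIndep W := by
  classical
  cases nonempty_fintype ι
  intro i
  have hco : J i ⊔ ⨅ j ∈ Finset.univ.erase i, J j = ⊤ := by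
    apply Ideal.sup_iInf_eq_top
    intro j hj
    apply (hJ i).coprime_of_ne (hJ j)
    intro h
    apply Finset.ne_of_mem_erase hj
    apply hinj
    ext v
    rw [hW, hW, h]
  obtain ⟨r, hr, s, hs, hrs⟩ := Submodule.mem_sup.mp (hco ▸ Submodule.mem_top : (1 : R) ∈ _)
  rw [Submodule.disjoint_def]
  intro v hv hv'
  have h1 : φ r v = 0 := (hW i v).mp hv r hr
  have h2 : (⨆ j, ⨆ (_ : j ≠ i), W j) ≤ LinearMap.ker (φ s) := by
    refine iSup₂_le fun j hj u hu => ?_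
    rw [LinearMap.mem_ker]
    refine (hW j u).mp hu s ?_
    simp only [Submodule.mem_iInf] at hs
    exact hs j (Finset.mem_erase.mpr ⟨hj, Finset.mem_univ _⟩)
  have h3 : φ s v = 0 := h2 hv'
  have h4 : φ (r + s) v = v := by rw [hrs]; simp
  rw [← h4, map_add, LinearMap.add_apply, h1, h3, add_zero]

lemma clifford {K G V : Type*} [Field K] [Group G] [Finite G] [AddCommGroup V] [Module K V]
    [Nontrivial V] (ρ : Representation K G V) (hinj : Function.Injective ρ)
    (A : Subgroup G) (hA : A.Normal) (hc : ∀ x ∈ A, ∀ y ∈ A, x * y = y * x)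
    (hcyc : ¬ IsCyclic A) :
    ∃ W : Submodule K V, W ≠ ⊥ ∧ W ≠ ⊤ ∧
      iSupIndep (fun U : Set.range (fun g => W.map (ρ g)) => (U : Submodule K V)) := by
  let : CommGroup A := { (inferInstance : Group A) with
    mul_comm := fun x y => Subtype.ext (hc x x.2 y y.2) }
  let R := MonoidAlgebra K A
  have : Module.Finite K R := inferInstance
  have : IsArtinianRing R := IsArtinianRing.of_finite K R
  let φ : R →ₐ[K] Module.End K V := MonoidAlgebra.lift K _ A (ρ.comp A.subtype)
  have hφ : ∀ a : A, φ (MonoidAlgebra.of K A a) = ρ a := fun a =>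
    MonoidAlgebra.lift_of (ρ.comp A.subtype) a
  let σ : G → (R ≃ₐ[K] R) := fun g => MonoidAlgebra.domCongr K K (MulAut.conjNormal g)
  have hσ : ∀ g r, φ (σ g r) * ρ g = ρ g * φ r := by
    intro g r
    induction r using MonoidAlgebra.induction_on with
    | of a =>
      have : σ g (MonoidAlgebra.of K A a) = MonoidAlgebra.of K A (MulAut.conjNormal g a) :=
        MonoidAlgebra.domCongr_single _ _ _
      rw [this, hφ, hφ, ← map_mul, ← map_mul]
      simp
    | add x y hx hy => simp only [map_add, add_mul, mul_add, hx, hy]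
    | smul c x hx => simp only [map_smul, smul_mul_assoc, mul_smul_comm, hx]
  obtain ⟨m, hm, v, hv, hmv⟩ : ∃ m : Ideal R, m.IsMaximal ∧ ∃ v : V, v ≠ 0 ∧
      ∀ r ∈ m, φ r v = 0 := by
    let : Module R V := Module.compHom V (φ : R →+* Module.End K V)
    have hsm : ∀ (r : R) (v : V), r • v = φ r v := fun r v => rfl
    obtain ⟨P, hP⟩ := associatedPrimes.nonempty R V
    obtain ⟨hPp, v, hv⟩ := Submodule.isAssociatedPrime_iff.mp hP
    have hmem : ∀ r, r ∈ P ↔ φ r v = 0 := by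
      intro r
      rw [hv]
      simp [Submodule.mem_colon_singleton, hsm]
    refine ⟨P, inferInstance, v, ?_, fun r hr => (hmem r).mp hr⟩
    rintro rfl
    exact hPp.ne_top ((Ideal.eq_top_iff_one _).mpr ((hmem 1).mpr (by simp)))
  let W : Submodule K V := ⨅ r ∈ m, LinearMap.ker (φ r)
  have hW : ∀ v, v ∈ W ↔ ∀ r ∈ m, φ r v = 0 := by intro v; simp [W]
  refine ⟨W, ?_, ?_, ?_⟩
  · intro h
    have : v ∈ W := (hW v).mpr hmv
    rw [h] at this
    exact hv (by simpa using this)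
  · intro h
    apply hcyc
    refine isCyclic_of_injective_ringHom (R := R ⧸ m) 
      ((Ideal.Quotient.mk m : R →* R ⧸ m).comp (MonoidAlgebra.of K A)) ?_
    intro a b hab
    have h1 : MonoidAlgebra.of K A a - MonoidAlgebra.of K A b ∈ m := Ideal.Quotient.eq.mp hab
    apply Subtype.ext
    apply hinj
    rw [← hφ, ← hφ]
    ext u
    have := (hW u).mp (h ▸ Submodule.mem_top) _ h1
    rw [map_sub, LinearMap.sub_apply, sub_eq_zero] at this
    exact this
  · have hch : ∀ U : Set.range (fun g => W.map (ρ g)), ∃ g, W.map (ρ g) = U := fun U => U.2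
    choose g hg using hch
    refine indep_of_max (φ : R →+* Module.End K V)
      (fun U => m.comap ((σ (g U)).symm : R →+* R)) ?_ _ ?_ Subtype.val_injective
    · intro U
      exact Ideal.comap_isMaximal_of_surjective _ (σ (g U)).symm.surjective
    · intro U v
      rw [← hg U]
      constructor
      · rintro ⟨u, hu, rfl⟩ r hr
        have h1 := hσ (g U) ((σ (g U)).symm r)
        rw [AlgEquiv.apply_symm_apply] at h1
        have h2 := LinearMap.congr_fun h1 u
        rw [Module.End.mul_apply, Module.End.mul_apply, show φ ((σ (g U)).symm r) u = 0 from (hW u).mp hu _ hr, map_zero] at h2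
        exact h2
      · intro hv
        refine ⟨ρ (g U)⁻¹ v, (hW _).mpr fun r hr => ?_, by simp⟩
        have h2 := LinearMap.congr_fun (hσ (g U) r) (ρ (g U)⁻¹ v)
        rw [Module.End.mul_apply, Module.End.mul_apply, ρ.self_inv_apply] at h2
        have h3 : φ (σ (g U) r) v = 0 := hv _ (by simpa using hr)
        rw [h3] at h2
        have := congrArg (ρ (g U)⁻¹) h2
        simpa using this.symm

lemma clifford_induced {k K G V : Type*} [Field k] [Field K] [Algebra k K] [Group G] [Finite G]
    [AddCommGroup V] [Module K V] (F : IntermediateField k K)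
    (ρ : Representation K G V) (hirr : RepIrr ρ) (W : Submodule K V) (hW : W ≠ ⊥)
    (hind : iSupIndep (fun U : Set.range (fun g => W.map (ρ g)) => (U : Submodule K V))) :
    ∃ (H : Subgroup G) (τ : Representation K H W), RepIrr τ ∧ (HasForm F τ → HasForm F ρ) := by
  classical
  obtain ⟨hnt, hirr⟩ := hirr
  have hmapmul : ∀ (U : Submodule K V) (g h : G), (U.map (ρ h)).map (ρ g) = U.map (ρ (g * h)) := by
    intro U g h
    rw [map_mul, ← Submodule.map_comp]; rfl
  have hmapone : ∀ U : Submodule K V, U.map (ρ 1) = U := by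
    intro U
    rw [map_one]; exact Submodule.map_id U
  -- any nonzero subspace has translates spanning everything
  have hspan : ∀ U : Submodule K V, U ≠ ⊥ → ⨆ g, U.map (ρ g) = ⊤ := by
    intro U hU
    have hinv : ∀ g, ∀ v ∈ ⨆ g, U.map (ρ g), ρ g v ∈ ⨆ g, U.map (ρ g) := by
      intro g
      change _ ≤ (⨆ g, U.map (ρ g)).comap (ρ g)
      rw [← Submodule.map_le_iff_le_comap, Submodule.map_iSup]
      refine iSup_le fun h => ?_
      rw [hmapmul]
      exact le_iSup (fun g => U.map (ρ g)) (g * h)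
    rcases hirr (⨆ g, U.map (ρ g)) hinv with h | h
    · exfalso
      apply hU
      rw [eq_bot_iff, ← h]
      exact (hmapone U).ge.trans (le_iSup (fun g => U.map (ρ g)) 1)
    · exact h
  let H : Subgroup G :=
    { carrier := {g | W.map (ρ g) = W}
      one_mem' := hmapone W
      mul_mem' := by
        intro a b ha hb
        change W.map (ρ (a * b)) = W
        rw [← hmapmul, hb, ha]
      inv_mem' := by
        intro a ha
        change W.map (ρ a⁻¹) = W
        conv_lhs => rw [← show W.map (ρ a) = W from ha]
        rw [hmapmul, inv_mul_cancel, hmapone] }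
  have hH : ∀ g, g ∈ H ↔ W.map (ρ g) = W := fun g => Iff.rfl
  have hHW : ∀ h : H, ∀ v ∈ W, ρ h v ∈ W := by
    intro h v hv
    rw [← (hH h).mp h.2]
    exact Submodule.mem_map_of_mem hv
  let τ : Representation K H W :=
    { toFun := fun h => (ρ h).restrict (hHW h)
      map_one' := by ext; simp
      map_mul' := by intro a b; ext; simp }
  have hτ : ∀ h w, ((τ h w : W) : V) = ρ h w := fun h w => rfl
  let i0 : Set.range (fun g => W.map (ρ g)) := ⟨W, 1, hmapone W⟩
  refine ⟨H, τ, ⟨(Submodule.nontrivial_iff_ne_bot).mpr hW, ?_⟩, ?_⟩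
  · intro U hU
    by_cases hU0 : U = ⊥
    · exact Or.inl hU0
    right
    let U' : Submodule K V := U.map W.subtype
    have hU'W : U' ≤ W := Submodule.map_subtype_le W U
    have hU'0 : U' ≠ ⊥ := by
      intro h
      exact hU0 (Submodule.map_injective_of_injective W.injective_subtype (h.trans (Submodule.map_bot _).symm))
    have hU'H : ∀ h ∈ H, U'.map (ρ h) ≤ U' := by
      rintro h hh _ ⟨_, ⟨u, hu, rfl⟩, rfl⟩
      exact ⟨τ ⟨h, hh⟩ u, hU _ _ hu, rfl⟩
    have h1 : (⊤ : Submodule K V) ≤ U' ⊔ ⨆ (j) (_ : j ≠ i0), (j : Submodule K V) := by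
      rw [← hspan U' hU'0]
      refine iSup_le fun g => ?_
      by_cases hg : g ∈ H
      · exact (hU'H g hg).trans le_sup_left
      · refine le_trans ?_ le_sup_right
        refine (Submodule.map_mono hU'W).trans ?_
        have hne : (⟨W.map (ρ g), g, rfl⟩ : Set.range (fun g => W.map (ρ g))) ≠ i0 := by
          intro h
          exact hg (congrArg Subtype.val h)
        exact le_iSup₂ (f := fun (j : Set.range (fun g => W.map (ρ g))) (_ : j ≠ i0) =>
          (j : Submodule K V)) _ hne
    have h2 : W ≤ U' := by
      have hd := (hind i0).eq_bot
      calc W ≤ (U' ⊔ ⨆ (j) (_ : j ≠ i0), (j : Submodule K V)) ⊓ W := le_inf (le_top.trans h1) le_rfl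
        _ = U' ⊔ (⨆ (j) (_ : j ≠ i0), (j : Submodule K V)) ⊓ W := sup_inf_assoc_of_le _ hU'W
        _ ≤ U' := by
          rw [inf_comm]
          exact sup_le le_rfl (hd.le.trans bot_le)
    rw [eq_top_iff]
    intro w _
    obtain ⟨u, hu, huw⟩ := h2 w.2
    have : u = w := Subtype.ext huw
    exact this ▸ hu
  · rintro ⟨n, b, hb⟩
    have hch : ∀ U : Set.range (fun g => W.map (ρ g)), ∃ g, W.map (ρ g) = U := fun U => U.2
    choose c hc using hch
    have hinternal : DirectSum.IsInternal
        (fun U : Set.range (fun g => W.map (ρ g)) => (U : Submodule K V)) := by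
      apply DirectSum.isInternal_submodule_of_iSupIndep_of_iSup_eq_top hind
      rw [eq_top_iff, ← hspan W hW]
      exact iSup_le fun g => le_iSup
        (fun U : Set.range (fun g => W.map (ρ g)) => (U : Submodule K V)) ⟨_, g, rfl⟩
    have hρinj : ∀ g, Function.Injective (ρ g) := fun g =>
      Function.LeftInverse.injective (g := ρ g⁻¹) fun v => by simp
    let bU : ∀ U : Set.range (fun g => W.map (ρ g)), Basis (Fin n) K (U : Submodule K V) :=
      fun U => (b.map (Submodule.equivMapOfInjective (ρ (c U)) (hρinj _) W)).map
        (LinearEquiv.ofEq _ _ (hc U))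
    have hbU : ∀ U i, (bU U i : V) = ρ (c U) (b i) := fun U i => rfl
    let B := hinternal.collectedBasis bU
    have hB : ∀ U i, B ⟨U, i⟩ = ρ (c U) (b i) := by
      intro U i
      simp only [B, DirectSum.IsInternal.collectedBasis_coe]
      exact hbU U i
    refine HasForm.of_basis F ρ B ?_
    rintro g ⟨U, i⟩
    rw [hB]
    let U' : Set.range (fun g => W.map (ρ g)) := ⟨U.1.map (ρ g), g * c U, by
      simp only; rw [← hmapmul, hc]⟩
    have hh : (c U')⁻¹ * (g * c U) ∈ H := by
      rw [hH, ← hmapmul, ← hmapmul, hc U]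
      change (U' : Submodule K V).map _ = W
      rw [← hc U', hmapmul, inv_mul_cancel, hmapone]
    have h1 : ρ g (ρ (c U) (b i)) = ρ (c U') (τ ⟨_, hh⟩ (b i) : W) := by
      rw [hτ, ← Module.End.mul_apply, ← Module.End.mul_apply, ← map_mul, ← map_mul]
      simp
    rw [h1]
    let L : W →ₗ[F] V := ((ρ (c U')).comp W.subtype).restrictScalars F
    have h2 : Submodule.map L (Submodule.span F (Set.range b)) ≤ Submodule.span F (Set.range B) := by
      rw [Submodule.map_span, Submodule.span_le]
      rintro _ ⟨_, ⟨j, rfl⟩, rfl⟩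
      exact Submodule.subset_span ⟨⟨U', j⟩, hB U' j⟩
    exact h2 (Submodule.mem_map_of_mem (f := L) (hb ⟨_, hh⟩ i))

lemma exists_faithful_quotient {K G V : Type*} [Field K] [Group G] [AddCommGroup V] [Module K V]
    (ρ : Representation K G V) : ∃ (N : Subgroup G) (_ : N.Normal)
      (ρ' : Representation K (G ⧸ N) V), Function.Injective ρ' ∧
      ∀ g : G, ρ' (QuotientGroup.mk g) = ρ g := by
  let ρ₀ : G →* Module.End K V := ρ
  let ρ₁ : G ⧸ ρ₀.ker →* Module.End K V := QuotientGroup.lift ρ₀.ker ρ₀ fun x hx => hx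
  refine ⟨ρ₀.ker, inferInstance, ρ₁, ?_, fun g => rfl⟩
  change Function.Injective ρ₁
  rw [injective_iff_map_eq_one]
  intro a ha
  induction a using QuotientGroup.induction_on with
  | H g => exact (QuotientGroup.eq_one_iff g).mpr ha

theorem hasForm_of_pgroup {p : ℕ} (hp : p.Prime) (hodd : p ≠ 2) {k K : Type*} [Field k] [Field K]
    [Algebra k K] (d : ℕ) : ∀ {G : Type u} {V : Type v} [Group G] [Finite G] [AddCommGroup V]
    [Module K V] [FiniteDimensional K V] (ρ : Representation K G V), IsPGroup p G →
    RepIrr ρ → finrank K V = d → HasForm (algebraicClosure k K) ρ := by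
  induction d using Nat.strong_induction_on with
  | _ d ih =>
    -- faithful case
    have key : ∀ {G : Type u} {V : Type v} [Group G] [Finite G] [AddCommGroup V]
        [Module K V] [FiniteDimensional K V] (ρ : Representation K G V), IsPGroup p G →
        RepIrr ρ → finrank K V = d → Function.Injective ρ →
        HasForm (algebraicClosure k K) ρ := by
      intro G V _ _ _ _ _ ρ hG hirr hd hinj
      by_cases h : ∀ A : Subgroup G, A.Normal → (∀ x ∈ A, ∀ y ∈ A, x * y = y * x) → IsCyclic A
      · have := pgroup_cyclic hp hodd hG h
        exact hasForm_cyclic ρ hirr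
      · push Not at h
        obtain ⟨A, hA, hc, hcyc⟩ := h
        have := hirr.1
        obtain ⟨W, hW0, hW1, hind⟩ := clifford ρ hinj A hA hc hcyc
        obtain ⟨H, τ, hτ, himp⟩ := clifford_induced (algebraicClosure k K) ρ hirr W hW0 hind
        apply himp
        refine ih (finrank K W) ?_ τ (hG.to_subgroup H) hτ rfl
        rw [← hd]
        exact Submodule.finrank_lt hW1
    intro G V _ _ _ _ _ ρ hG hirr hd
    obtain ⟨N, hN, ρ', hinj, hρ'⟩ := exists_faithful_quotient ρ
    obtain ⟨n, b, hb⟩ := key ρ' (hG.to_quotient N)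
      ⟨hirr.1, fun W hW => hirr.2 W fun g v hv => by
        rw [← hρ' g]; exact hW _ v hv⟩ hd hinj
    exact ⟨n, b, fun g i => by rw [← hρ' g]; exact hb _ i⟩

lemma repr_mem_of_span {k K V ι : Type*} [Field k] [Field K] [Algebra k K] [AddCommGroup V]
    [Module K V] (F : IntermediateField k K) (b : Basis ι K V) (v : V)
    (hv : v ∈ Submodule.span F (Set.range b)) (i : ι) : b.repr v i ∈ F := by
  classical
  induction hv using Submodule.span_induction with
  | mem x hx =>
    obtain ⟨j, rfl⟩ := hx
    rw [Basis.repr_self, Finsupp.single_apply]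
    split_ifs
    · exact one_mem F
    · exact zero_mem F
  | zero => simp
  | add x y _ _ hx hy => rw [map_add]; exact add_mem hx hy
  | smul c x _ hx =>
    have : c • x = (c : K) • x := rfl
    rw [this, map_smul]
    exact mul_mem c.2 hx

end helpers

theorem ed_zero_of_odd_p_group {p : ℕ} (hp : Nat.Prime p) (hodd : p ≠ 2)
    {k : Type*} [Field k] [CharZero k]
    {K : Type*} [Field K] [Algebra k K]
    {G : Type*} [Group G] [Finite G] (hG : IsPGroup p G) {n : ℕ}
    (ρ : G →* GL (Fin n) K) (hirr : IsIrreducibleRep ρ)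
    (hχ : ∀ g : G, repChar ρ g ∈ (algebraMap k K).range) :
    ∃ K₀ : IntermediateField k K, Algebra.IsAlgebraic k K₀ ∧ Descends ρ K₀ := by
  refine ⟨algebraicClosure k K, inferInstance, ?_⟩
  set F := algebraicClosure k K
  have hn : Nonempty (Fin n) := ⟨⟨0, hirr.1⟩⟩
  let τ : Representation K G (Fin n → K) :=
    ((Matrix.toLinAlgEquiv' : Matrix (Fin n) (Fin n) K ≃ₐ[K] _) : Matrix (Fin n) (Fin n) K →* _).comp
      ((Units.coeHom _).comp ρ)
  have hτ : ∀ g v, τ g v = (ρ g : Matrix (Fin n) (Fin n) K).mulVec v := fun g v => rfl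
  have hτirr : RepIrr τ := ⟨inferInstance, fun W hW => hirr.2 W hW⟩
  obtain ⟨m, b, hb⟩ := hasForm_of_pgroup (k := k) hp hodd _ τ hG hτirr rfl
  obtain rfl : m = n := by
    have := Module.finrank_eq_card_basis b
    simpa using this.symm
  let P : G → Matrix (Fin m) (Fin m) K := fun g => LinearMap.toMatrix b b (τ g)
  have hP : ∀ g i j, P g i j ∈ F := by
    intro g i j
    simp only [P, LinearMap.toMatrix_apply]
    exact repr_mem_of_span F b _ (hb g j) i
  have hPmul : ∀ g h, P (g * h) = P g * P h := by
    intro g h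
    simp only [P, map_mul]
    exact LinearMap.toMatrix_comp b b b _ _
  let φ := (algebraMap F K).mapMatrix (m := Fin m)
  have hφ : Function.Injective φ := Matrix.map_injective (algebraMap F K).injective
  let Q : G → Matrix (Fin m) (Fin m) F := fun g => Matrix.of fun i j => ⟨P g i j, hP g i j⟩
  have hQ : ∀ g, φ (Q g) = P g := fun g => rfl
  let Q' : G →* Matrix (Fin m) (Fin m) F :=
    { toFun := Q
      map_one' := by
        apply hφ
        rw [hQ, map_one]
        simp only [P, map_one]
        exact LinearMap.toMatrix_one b
      map_mul' := by
        intro g h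
        apply hφ
        rw [map_mul, hQ, hQ, hQ, hPmul] }
  let e := Pi.basisFun K (Fin m)
  let M : GL (Fin m) K :=
    ⟨e.toMatrix b, b.toMatrix e, e.toMatrix_mul_toMatrix_flip b, b.toMatrix_mul_toMatrix_flip e⟩
  refine ⟨Q'.toHomUnits, M, fun g => ?_⟩
  apply Units.ext
  change (ρ g : Matrix (Fin m) (Fin m) K) = e.toMatrix b * P g * b.toMatrix e
  have := basis_toMatrix_mul_linearMap_toMatrix_mul_basis_toMatrix e b e b (τ g)
  rw [this]
  exact (LinearMap.toMatrix'_toLin' _).symm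
end

section
/- For every integer l ≥ 0 there exist a finite 2-group G, a field extension K/ℚ, an integer n, and a K-irreducible representation ρ : G → GL_n(K) whose character takes values in ℚ, such that the essential dimension of ρ over ℚ equals 2^l; that is, ρ descends to some intermediate field ℚ ⊆ K₀ ⊆ K with trdeg_ℚ(K₀) = 2^l, and ρ does not descend to any intermediate field of transcendence degree over ℚ smaller than 2^l. -/
open Matrix

/-- The transcendence degree of `K₀` over `k` is at most `d`. -/
def TrdegLE {k K : Type*} [Field k] [Field K] [Algebra k K]
    (K₀ : IntermediateField k K) (d : ℕ) : Prop :=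
  ∀ s : Finset K₀,
    AlgebraicIndependent k (fun x : {y : K₀ // y ∈ s} => (x : K₀)) → s.card ≤ d

/-- The transcendence degree of `K₀` over `k` equals `d`. -/
def TrdegEq {k K : Type*} [Field k] [Field K] [Algebra k K]
    (K₀ : IntermediateField k K) (d : ℕ) : Prop :=
  TrdegLE K₀ d ∧
  (∃ s : Finset K₀,
      AlgebraicIndependent k (fun x : {y : K₀ // y ∈ s} => (x : K₀)) ∧ s.card = d)

/-- The transcendence degree of `K₀` over `k` is (strictly) less than `d`. -/
def TrdegLT {k K : Type*} [Field k] [Field K] [Algebra k K]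
    (K₀ : IntermediateField k K) (d : ℕ) : Prop :=
  ∀ s : Finset K₀,
    AlgebraicIndependent k (fun x : {y : K₀ // y ∈ s} => (x : K₀)) → s.card < d

/-- A witness that there is a `K`-irreducible representation of a finite `2`-group over
a field extension `K/ℚ`, with rational character, whose essential dimension over `ℚ` is
exactly `2^l`. -/
structure SchillingWitness (l : ℕ) : Type 1 where
  G : Type
  K : Type
  [grp : Group G]
  [fin : Finite G]
  [field_K : Field K]
  [alg : Algebra ℚ K]
  two_group : IsPGroup 2 G
  n : ℕ
  ρ : G →* GL (Fin n) K
  irred : IsIrreducibleRep ρ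
  char_rat : ∀ g : G, repChar ρ g ∈ (algebraMap ℚ K).range
  descends_to_ed : ∃ K₀ : IntermediateField ℚ K, Descends ρ K₀ ∧ TrdegEq K₀ (2 ^ l)
  not_below_ed : ∀ K₀ : IntermediateField ℚ K, TrdegLT K₀ (2 ^ l) → ¬ Descends ρ K₀

section Part1
open Polynomial IntermediateField
open scoped Polynomial.Bivariate

theorem fr_adjoin {F E : Type*} [Field F] [Field E] [Algebra F E] (u : E)
    (hu : Transcendental F u) :
    ∃ _ : Algebra F[X] F⟮u⟯, IsFractionRing F[X] F⟮u⟯ ∧ IsScalarTower F[X] F⟮u⟯ F⟮u⟯ ∧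
      (∀ p : F[X], ((algebraMap F[X] F⟮u⟯ p : F⟮u⟯) : E) = aeval u p) := by
  let alg : Algebra F[X] F⟮u⟯ := (aeval (AdjoinSimple.gen F u)).toRingHom.toAlgebra
  have hal : ∀ p : F[X], ((algebraMap F[X] F⟮u⟯ p : F⟮u⟯) : E) = aeval u p := by
    intro p
    change (algebraMap F⟮u⟯ E) (aeval (AdjoinSimple.gen F u) p) = _
    rw [← aeval_algebraMap_apply]; simp
  refine ⟨alg, ?_, inferInstance, hal⟩
  have : FaithfulSMul F[X] F⟮u⟯ := by
    rw [faithfulSMul_iff_algebraMap_injective]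
    rw [transcendental_iff_injective] at hu
    intro p q h
    apply hu
    rw [← hal, ← hal, h]
  apply IsFractionRing.of_field
  intro z
  obtain ⟨r, s, h⟩ := (mem_adjoin_simple_iff F (z : E)).1 z.2
  refine ⟨r, s, ?_⟩
  apply Subtype.ext
  rw [h]; push_cast; rw [hal, hal]

theorem aevalAeval_eq {F E : Type*} [Field F] [Field E] [Algebra F E] (u v : E)
    [Algebra F[X] F⟮u⟯] 
    (h : ∀ p : F[X], ((algebraMap F[X] F⟮u⟯ p : F⟮u⟯) : E) = aeval u p) (p : F[X][Y]) :
    aevalAeval u v p = aeval v (p.map (algebraMap F[X] F⟮u⟯)) := by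
  induction p using Polynomial.induction_on' with
  | add p q hp hq => rw [map_add, hp, hq, Polynomial.map_add, map_add]
  | monomial n a =>
    rw [← C_mul_X_pow_eq_monomial, map_mul, map_pow, aevalAeval_C, aevalAeval_Y]
    rw [← h a]; simp

theorem kernel_gen_aux {F E : Type*} [Field F] [Field E] [Algebra F E] (u v : E)
    (hu : Transcendental F u) (Φ : F[X][Y]) (hirr : Irreducible Φ) (h0 : aevalAeval u v Φ = 0)
    (p : F[X][Y]) (hp : aevalAeval u v p = 0) : Φ ∣ p := by
  obtain ⟨_, hfr, _, hal⟩ := fr_adjoin u hu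
  have hdeg : Φ.natDegree ≠ 0 := by
    intro h
    rw [natDegree_eq_zero] at h
    obtain ⟨a, rfl⟩ := h
    rw [aevalAeval_C] at h0
    have : a = 0 := by
      rw [transcendental_iff] at hu
      exact hu a h0
    simp [this] at hirr
  have hprim : Φ.IsPrimitive := hirr.isPrimitive hdeg
  have hirr' := (hprim.irreducible_iff_irreducible_map_fraction_map (K := F⟮u⟯)).1 hirr
  rw [aevalAeval_eq u v hal] at h0 hp
  have hd : Φ.map (algebraMap F[X] F⟮u⟯) ∣ p.map (algebraMap F[X] F⟮u⟯) := by
    have h1 : minpoly F⟮u⟯ v ∣ Φ.map (algebraMap F[X] F⟮u⟯) := minpoly.dvd _ _ h0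
    have h2 := minpoly.dvd _ _ hp
    have hintegral : IsIntegral F⟮u⟯ v := IsAlgebraic.isIntegral ⟨_, hirr'.ne_zero, h0⟩
    have := (minpoly.irreducible hintegral).associated_of_dvd hirr' h1
    exact (this.symm.dvd).trans h2
  obtain ⟨q, hq⟩ := hd
  -- clear denominators
  obtain ⟨b, hb, hbq⟩ := IsLocalization.integerNormalization_spec (nonZeroDivisors F[X]) q
  have hinj : Function.Injective (algebraMap F[X] F⟮u⟯) := IsFractionRing.injective _ _
  have e : C b * p = Φ * IsLocalization.integerNormalization (nonZeroDivisors F[X]) q := by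
    apply Polynomial.map_injective _ hinj
    rw [Polynomial.map_mul, Polynomial.map_mul, hbq, hq]
    have : b • q = C (algebraMap F[X] F⟮u⟯ b) * q := by
      ext1 i; simp [Algebra.smul_def]
    rw [this, Polynomial.map_C]; ring
  have hpr := hirr.prime
  rcases hpr.dvd_or_dvd (Dvd.intro _ e.symm) with h | h
  · exfalso
    have : b ≠ 0 := nonZeroDivisors.ne_zero hb
    have := natDegree_le_of_dvd h (by simpa using this)
    simp at this; exact hdeg this
  · exact h

theorem kernel_gen {F E : Type*} [Field F] [Field E] [Algebra F E] (u v : E)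
    (hnot : ¬ (IsAlgebraic F u ∧ IsAlgebraic F v)) (Φ : F[X][Y]) (hirr : Irreducible Φ)
    (h0 : aevalAeval u v Φ = 0)
    (p : F[X][Y]) (hp : aevalAeval u v p = 0) : Φ ∣ p := by
  by_cases hu : IsAlgebraic F u
  · have hv : Transcendental F v := fun h => hnot ⟨hu, h⟩
    have := kernel_gen_aux v u hv (Bivariate.swap Φ)
      ((MulEquiv.irreducible_iff (Bivariate.swap (R := F))).2 hirr)
      (by rw [Bivariate.aevalAeval_swap]; exact h0) (Bivariate.swap p)
      (by rw [Bivariate.aevalAeval_swap]; exact hp)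
    have := map_dvd (Bivariate.swap (R := F)) this
    simpa [Bivariate.swap_swap_apply] using this
  · exact kernel_gen_aux u v hu Φ hirr h0 p hp

theorem exists_irred {F E : Type*} [Field F] [Field E] [Algebra F E] (u v : E)
    (p : F[X][Y]) (hp0 : p ≠ 0) (hp : aevalAeval u v p = 0) :
    ∃ Φ : F[X][Y], Irreducible Φ ∧ aevalAeval u v Φ = 0 := by
  obtain ⟨f, hf, hfp⟩ := WfDvdMonoid.exists_factors p hp0
  obtain ⟨c, hc⟩ := hfp
  rw [← hc, map_mul, mul_eq_zero, map_multiset_prod, Multiset.prod_eq_zero_iff] at hp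
  rcases hp with hp | hp
  · obtain ⟨a, ha, h⟩ := Multiset.mem_map.1 hp
    exact ⟨a, hf a ha, h⟩
  · exact absurd hp ((c.isUnit.map (aevalAeval (R := F) u v)).ne_zero)

theorem natDegree_minpoly_of_gen {F E : Type*} [Field F] [Field E] [Algebra F E] (u v : E)
    (Θ : F[X][Y]) (h0 : Θ ≠ 0) (hΘ : aevalAeval u v Θ = 0)
    (hgen : ∀ p : F[X][Y], aevalAeval u v p = 0 → Θ ∣ p)
    (hnot : ¬ (IsAlgebraic F u ∧ IsAlgebraic F v)) :
    (minpoly F⟮u⟯ v).natDegree = Θ.natDegree := by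
  by_cases hu : IsAlgebraic F u
  · have hv : Transcendental F v := fun h => hnot ⟨hu, h⟩
    have h1 : minpoly F⟮u⟯ v = 0 := by
      apply minpoly.eq_zero
      intro h
      have : Algebra.IsAlgebraic F F⟮u⟯ := isAlgebraic_adjoin_simple hu.isIntegral
      exact hv (h.isAlgebraic.restrictScalars F)
    have h2 : Θ ∣ C (minpoly F u) := hgen _ (by rw [aevalAeval_C, minpoly.aeval])
    have := natDegree_le_of_dvd h2 (by simpa using minpoly.ne_zero hu.isIntegral)
    rw [h1]; simp at this ⊢; omega
  · obtain ⟨_, hfr, _, hal⟩ := fr_adjoin u hu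
    have hinj : Function.Injective (algebraMap F[X] F⟮u⟯) := IsFractionRing.injective _ _
    have hΘ' := hΘ
    rw [aevalAeval_eq u v hal] at hΘ'
    have hne : Θ.map (algebraMap F[X] F⟮u⟯) ≠ 0 := (Polynomial.map_ne_zero_iff hinj).2 h0
    have hintegral : IsIntegral F⟮u⟯ v := IsAlgebraic.isIntegral ⟨_, hne, hΘ'⟩
    apply le_antisymm
    · have := natDegree_le_of_dvd (minpoly.dvd _ _ hΘ') hne
      rwa [natDegree_map_eq_of_injective hinj] at this
    · set q := minpoly F⟮u⟯ v with hq
      have hq0 : q ≠ 0 := minpoly.ne_zero hintegral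
      set g := IsLocalization.integerNormalization (nonZeroDivisors F[X]) q with hg
      obtain ⟨b, hb, hbq⟩ := IsLocalization.integerNormalization_spec (nonZeroDivisors F[X]) q
      have hg0 : g ≠ 0 := by
        rw [hg, Ne, IsFractionRing.integerNormalization_eq_zero_iff]; exact hq0
      have hgv : aevalAeval u v g = 0 := by
        rw [aevalAeval_eq u v hal, hbq]
        have : b • q = C (algebraMap F[X] F⟮u⟯ b) * q := by
          ext1 i; simp [Algebra.smul_def]
        rw [this, map_mul, hq, minpoly.aeval, mul_zero]
      have h1 := natDegree_le_of_dvd (hgen g hgv) hg0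
      refine h1.trans ?_
      rw [← natDegree_map_eq_of_injective hinj, hbq]
      exact natDegree_smul_le _ _

end Part1

section Part2
open Polynomial IntermediateField
open scoped Polynomial.Bivariate

/-- The substitution `X ↦ XY`, `Y ↦ Y`. -/
noncomputable def thetaHom (F : Type*) [Field F] : F[X][Y] →ₐ[F] F[X][Y] :=
  aevalAeval (C X * Y) Y

theorem thetaHom_eval {F E : Type*} [Field F] [Field E] [Algebra F E] (w v : E) (p : F[X][Y]) :
    aevalAeval w v (thetaHom F p) = aevalAeval (w * v) v p := by
  induction p using Polynomial.induction_on' with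
  | add p q hp hq => simp only [map_add, hp, hq]
  | monomial n a =>
    rw [← C_mul_X_pow_eq_monomial]
    induction a using Polynomial.induction_on' with
    | add p q hp hq => simp only [map_add, add_mul, hp, hq]
    | monomial m a =>
      rw [← C_mul_X_pow_eq_monomial]
      simp only [thetaHom, map_mul, map_pow, aevalAeval_C, aevalAeval_Y]
      simp [mul_comm v w]

theorem thetaHom_monomial {F : Type*} [Field F] (n m : ℕ) (a : F) :
    thetaHom F (monomial n (monomial m a)) = monomial (n + m) (monomial m a) := by
  rw [← C_mul_X_pow_eq_monomial, ← C_mul_X_pow_eq_monomial, ← C_mul_X_pow_eq_monomial]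
  simp only [thetaHom, map_mul, map_pow, aevalAeval_C, aevalAeval_Y]
  simp [Polynomial.algebraMap_apply]
  ring

theorem thetaHom_coeff {F : Type*} [Field F] (p : F[X][Y]) (N : ℕ) :
    (thetaHom F p).coeff N =
      ∑ j ∈ Finset.range (N + 1), monomial (N - j) ((p.coeff j).coeff (N - j)) := by
  induction p using Polynomial.induction_on' with
  | add p q hp hq => simp only [map_add, coeff_add, hp, hq, Finset.sum_add_distrib]
  | monomial n a =>
    induction a using Polynomial.induction_on' with
    | add p q hp hq => 
      simp only [map_add, coeff_add, hp, hq, ← Finset.sum_add_distrib]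
    | monomial m a =>
      rw [thetaHom_monomial, coeff_monomial]
      by_cases h : n + m = N
      · rw [if_pos h, Finset.sum_eq_single n]
        · have : N - n = m := by omega
          simp [this]
        · intro b _ hb
          simp [coeff_monomial, hb.symm]
        · intro hn; simp at hn; omega
      · rw [if_neg h]
        symm
        apply Finset.sum_eq_zero
        intro j hj
        simp at hj
        by_cases h1 : n = j
        · subst h1
          have : m ≠ N - n := by omega
          simp [coeff_monomial, this]
        · simp [coeff_monomial, h1]

theorem thetaHom_star {F : Type*} [Field F] (p : F[X][Y]) :
    ∃ (N : ℕ) (q : F[X][Y]), thetaHom F q = Y ^ N * p := by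
  have hadd : ∀ p q : F[X][Y], (∃ (N : ℕ) (r : F[X][Y]), thetaHom F r = Y ^ N * p) →
      (∃ (N : ℕ) (r : F[X][Y]), thetaHom F r = Y ^ N * q) →
      (∃ (N : ℕ) (r : F[X][Y]), thetaHom F r = Y ^ N * (p + q)) := by
    rintro p q ⟨N, r, h⟩ ⟨N', r', h'⟩
    refine ⟨N + N', Y ^ N' * r + Y ^ N * r', ?_⟩
    have hY : thetaHom F Y = Y := by simp [thetaHom]
    rw [map_add, map_mul, map_mul, map_pow, map_pow, h, h', hY]
    ring
  induction p using Polynomial.induction_on' with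
  | add p q hp hq => exact hadd p q hp hq
  | monomial n a =>
    induction a using Polynomial.induction_on' with
    | add p q hp hq => rw [map_add]; exact hadd _ _ hp hq
    | monomial m a =>
      refine ⟨m, monomial n (monomial m a), ?_⟩
      rw [thetaHom_monomial, X_pow_mul_monomial, add_comm]

theorem swap_coeff_coeff {F : Type*} [Field F] (p : F[X][Y]) (i j : ℕ) :
    ((Bivariate.swap p).coeff i).coeff j = (p.coeff j).coeff i := by
  induction p using Polynomial.induction_on' with
  | add p q hp hq => simp only [map_add, coeff_add, hp, hq]
  | monomial n a =>
    induction a using Polynomial.induction_on' with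
    | add p q hp hq => simp only [map_add, coeff_add, hp, hq]
    | monomial m a =>
      rw [Bivariate.swap_monomial_monomial]
      simp only [coeff_monomial]
      by_cases h1 : m = i <;> by_cases h2 : n = j <;> simp [h1, h2, coeff_monomial]

/-- `p` has degree at most `d` in `X`, at most `m` in `Y`, and the coefficients at `1` and at
`X ^ d * Y ^ m` are nonzero. -/
def Corner {F : Type*} [Field F] (p : F[X][Y]) (d m : ℕ) : Prop :=
  (p.coeff 0).coeff 0 ≠ 0 ∧ (∀ j, (p.coeff j).natDegree ≤ d) ∧ p.natDegree ≤ m ∧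
    (p.coeff m).coeff d ≠ 0

theorem Corner.natDegree_eq {F : Type*} [Field F] {p : F[X][Y]} {d m : ℕ} (h : Corner p d m) :
    p.natDegree = m := by
  obtain ⟨_, _, h3, h4⟩ := h
  apply le_antisymm h3
  apply le_natDegree_of_ne_zero
  intro h; simp [h] at h4

theorem Corner.natDegree_swap {F : Type*} [Field F] {p : F[X][Y]} {d m : ℕ} (h : Corner p d m) :
    (Bivariate.swap p).natDegree = d := by
  obtain ⟨_, h2, h3, h4⟩ := h
  apply le_antisymm
  · rw [natDegree_le_iff_coeff_eq_zero]
    intro N hN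
    ext j
    rw [swap_coeff_coeff, coeff_zero]
    exact coeff_eq_zero_of_natDegree_lt ((h2 j).trans_lt hN)
  · apply le_natDegree_of_ne_zero
    intro h
    rw [← swap_coeff_coeff, h] at h4; simp at h4

theorem coeff_natDegree_le_swap {F : Type*} [Field F] (p : F[X][Y]) (j : ℕ) :
    (p.coeff j).natDegree ≤ (Bivariate.swap p).natDegree := by
  rw [natDegree_le_iff_coeff_eq_zero]
  intro N hN
  rw [← swap_coeff_coeff, coeff_eq_zero_of_natDegree_lt hN, coeff_zero]

theorem Corner.of_dvd {F : Type*} [Field F] {p q : F[X][Y]} {d m : ℕ} (h : Corner p d m)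
    (hq : q ∣ p) : ∃ d' m', Corner q d' m' := by
  obtain ⟨r, rfl⟩ := hq
  have hm := h.natDegree_eq
  have hd := h.natDegree_swap
  obtain ⟨h1, h2, h3, h4⟩ := h
  have hne : q * r ≠ 0 := by rintro h; simp [h] at h4
  have hq0 := left_ne_zero_of_mul hne
  have hr0 := right_ne_zero_of_mul hne
  refine ⟨(Bivariate.swap q).natDegree, q.natDegree, ?_, coeff_natDegree_le_swap q, le_rfl, ?_⟩
  · intro h; rw [mul_coeff_zero, mul_coeff_zero, h, zero_mul] at h1; exact h1 rfl
  · have e1 : (q * r).coeff m = q.leadingCoeff * r.leadingCoeff := by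
      rw [← hm, ← leadingCoeff_mul]; rfl
    have e2 : (q.leadingCoeff * r.leadingCoeff).natDegree = d := by
      apply le_antisymm
      · rw [← e1]; exact h2 m
      · apply le_natDegree_of_ne_zero; rw [← e1]; exact h4
    rw [natDegree_mul (by simpa using hq0) (by simpa using hr0)] at e2
    rw [map_mul, natDegree_mul (by simpa using hq0) (by simpa using hr0)] at hd
    have i1 := coeff_natDegree_le_swap q q.natDegree
    have i2 := coeff_natDegree_le_swap r r.natDegree
    change q.leadingCoeff.natDegree ≤ _ at i1
    change r.leadingCoeff.natDegree ≤ _ at i2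
    have : (Bivariate.swap q).natDegree = q.leadingCoeff.natDegree := by omega
    rw [this]
    change q.leadingCoeff.leadingCoeff ≠ 0
    simpa using hq0

theorem thetaHom_gen {F E : Type*} [Field F] [Field E] [Algebra F E] (u v : E) (hv : v ≠ 0)
    (Φ : F[X][Y]) {d m : ℕ} (hc : Corner Φ d m)
    (hgen : ∀ p : F[X][Y], aevalAeval u v p = 0 → Φ ∣ p) (p : F[X][Y])
    (hp : aevalAeval (u / v) v p = 0) : thetaHom F Φ ∣ p := by
  obtain ⟨N, q, hq⟩ := thetaHom_star p
  have h1 : aevalAeval u v q = 0 := by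
    have := thetaHom_eval (u / v) v q
    rw [div_mul_cancel₀ _ hv] at this
    rw [← this, hq, map_mul, hp, mul_zero]
  obtain ⟨c, rfl⟩ := hgen q h1
  rw [map_mul] at hq
  have hY : ¬ (Y : F[X][Y]) ∣ thetaHom F Φ := by
    rw [X_dvd_iff, thetaHom_coeff]
    simpa using hc.1
  have := (prime_X (R := F[X])).pow_dvd_of_dvd_mul_left N hY (Dvd.intro _ hq.symm)
  obtain ⟨e, he⟩ := this
  rw [he, mul_left_comm] at hq
  have := mul_left_cancel₀ (pow_ne_zero N X_ne_zero) hq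
  exact Dvd.intro _ this

theorem thetaHom_natDegree {F : Type*} [Field F] (Φ : F[X][Y]) {d m : ℕ} (hc : Corner Φ d m) :
    (thetaHom F Φ).natDegree = d + m := by
  obtain ⟨h1, h2, h3, h4⟩ := hc
  have h2' : ∀ j n, d < n → (Φ.coeff j).coeff n = 0 := fun j n h =>
    coeff_eq_zero_of_natDegree_lt ((h2 j).trans_lt h)
  have h3' : ∀ j, m < j → Φ.coeff j = 0 := fun j h =>
    coeff_eq_zero_of_natDegree_lt (h3.trans_lt h)
  apply le_antisymm
  · rw [natDegree_le_iff_coeff_eq_zero]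
    intro N hN
    rw [thetaHom_coeff]
    apply Finset.sum_eq_zero
    intro j hj
    simp at hj
    by_cases h : m < j
    · simp [h3' j h]
    · rw [h2' j _ (by omega)]; simp
  · apply le_natDegree_of_ne_zero
    rw [thetaHom_coeff, Finset.sum_eq_single m]
    · have : d + m - m = d := by omega
      rw [this]; simpa using h4
    · intro j hj hjm
      simp at hj
      by_cases h : m < j
      · simp [h3' j h]
      · rw [h2' j _ (by omega)]; simp
    · intro h; simp at h

theorem finrank_adjoin_mul {F E : Type*} [Field F] [Field E] [Algebra F E] (u v : E) :
    Module.finrank F⟮u⟯ E = (minpoly F⟮u⟯ v).natDegree * Module.finrank F⟮u, v⟯ E := by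
  by_cases hv : IsIntegral F⟮u⟯ v
  · have h1 := Module.finrank_mul_finrank F⟮u⟯ F⟮u⟯⟮v⟯ E
    rw [adjoin.finrank hv] at h1
    rw [← h1]
    congr 1
    rw [← adjoin_simple_adjoin_simple]
    rfl
  · rw [minpoly.eq_zero hv, natDegree_zero, zero_mul]
    apply Module.finrank_of_infinite_dimensional
    intro h
    exact hv (Algebra.IsIntegral.isIntegral v)

theorem curve_core {F E : Type*} [Field F] [Field E] [Algebra F E] (u v : E) (hu : u ≠ 0) (hv : v ≠ 0)
    (hnot : ¬ (IsAlgebraic F u ∧ IsAlgebraic F v)) (P : F[X][Y]) {d m : ℕ} (hc : Corner P d m)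
    (hP : aevalAeval u v P = 0) :
    Module.finrank F⟮u / v⟯ E = Module.finrank F⟮u⟯ E + Module.finrank F⟮v⟯ E := by
  have hP0 : P ≠ 0 := by rintro rfl; exact hc.1 (by simp)
  obtain ⟨Φ, hirr, hΦ⟩ := exists_irred u v P hP0 hP
  have hgen := kernel_gen u v hnot Φ hirr hΦ
  obtain ⟨d, m, hc⟩ := hc.of_dvd (hgen P hP)
  have e1 := natDegree_minpoly_of_gen u v Φ hirr.ne_zero hΦ hgen hnot
  have e2 := natDegree_minpoly_of_gen v u (Bivariate.swap Φ)
    ((MulEquiv.irreducible_iff (Bivariate.swap (R := F))).2 hirr).ne_zero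
    (by rw [Bivariate.aevalAeval_swap]; exact hΦ) (by
      intro p hp
      have := hgen (Bivariate.swap p) (by rw [Bivariate.aevalAeval_swap]; exact hp)
      have := map_dvd (Bivariate.swap (R := F)) this
      simpa [Bivariate.swap_swap_apply] using this) (fun h => hnot h.symm)
  have hev : aevalAeval (u / v) v (thetaHom F Φ) = 0 := by
    rw [thetaHom_eval, div_mul_cancel₀ _ hv, hΦ]
  have hdeg := thetaHom_natDegree Φ hc
  have e3 := natDegree_minpoly_of_gen (u / v) v (thetaHom F Φ)
    (by intro h
        have := thetaHom_coeff Φ 0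
        rw [h] at this
        simp at this
        exact hc.1 (by simpa using this.symm)) hev
    (thetaHom_gen u v hv Φ hc hgen) (by
      rintro ⟨h1, h2⟩
      refine hnot ⟨?_, h2⟩
      rw [← div_mul_cancel₀ u hv]
      exact h1.mul h2)
  rw [hdeg] at e3
  rw [hc.natDegree_eq] at e1
  rw [hc.natDegree_swap] at e2
  rw [finrank_adjoin_mul (u / v) v, finrank_adjoin_mul u v, finrank_adjoin_mul v u, e1, e2, e3]
  have s1 : F⟮v, u⟯ = F⟮u, v⟯ := by rw [Set.pair_comm]
  have s2 : F⟮u / v, v⟯ = F⟮u, v⟯ := by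
    apply le_antisymm
    · rw [adjoin_le_iff]
      rintro x (rfl | rfl)
      · exact div_mem (subset_adjoin _ _ (by simp)) (subset_adjoin _ _ (by simp))
      · exact subset_adjoin _ _ (by simp)
    · rw [adjoin_le_iff]
      have hvm : v ∈ F⟮u / v, v⟯ := subset_adjoin _ _ (by simp)
      rintro x (rfl | rfl)
      · have : x = x / v * v := (div_mul_cancel₀ _ hv).symm
        have h2 : x / v ∈ F⟮x / v, v⟯ := subset_adjoin _ _ (by simp)
        have h3 := mul_mem h2 hvm
        rwa [← this] at h3
      · exact hvm
  rw [s1, s2]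
  ring

end Part2

section Part3
open Polynomial IntermediateField
open scoped Polynomial.Bivariate

/-- The homogeneous Möbius monomials. -/
noncomputable def mobMon {R : Type*} [CommRing R] (m : ℕ) (s : R) (b : ℕ) : R[X] :=
  (X + C s) ^ b * (1 - C s * X) ^ (m - b)

theorem mobMon_natDegree {R : Type*} [CommRing R] (m : ℕ) (s : R) (b : ℕ) (hb : b ≤ m) :
    (mobMon m s b).natDegree ≤ m := by
  unfold mobMon
  have h1 : ((X + C s : R[X])^b).natDegree ≤ b * 1 := natDegree_pow_le_of_le b (by compute_degree)
  have h2 : ((1 - C s * X : R[X])^(m-b)).natDegree ≤ (m-b) * 1 :=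
    natDegree_pow_le_of_le _ (by compute_degree)
  have := natDegree_mul_le (p := (X + C s : R[X])^b) (q := (1 - C s * X : R[X])^(m-b))
  omega

theorem mobMon_coeff_zero {R : Type*} [CommRing R] (m : ℕ) (s : R) (b : ℕ) :
    (mobMon m s b).coeff 0 = s ^ b := by
  unfold mobMon
  rw [coeff_zero_eq_eval_zero]; simp

theorem mobMon_coeff {R : Type*} [CommRing R] (m : ℕ) (s : R) (b : ℕ) (hb : b ≤ m) :
    (mobMon m s b).coeff m = (- s) ^ (m - b) := by
  unfold mobMon
  have h1 : ((X + C s : R[X])^b).natDegree ≤ b * 1 := natDegree_pow_le_of_le b (by compute_degree)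
  have h2 : ((1 - C s * X : R[X])^(m-b)).natDegree ≤ (m-b) * 1 :=
    natDegree_pow_le_of_le _ (by compute_degree)
  have key := coeff_mul_add_eq_of_natDegree_le h1 h2
  rw [show b * 1 + (m - b) * 1 = m by omega] at key
  rw [key]
  rw [coeff_pow_of_natDegree_le (by compute_degree), 
    coeff_pow_of_natDegree_le (by compute_degree)]
  simp [coeff_one]

theorem mobMon_aeval {R E : Type*} [CommRing R] [Field E] [Algebra R E] (m : ℕ) (s : R) (b : ℕ)
    (hb : b ≤ m) (u u' : E) (h : u' + algebraMap R E s = u * (1 - algebraMap R E s * u')) :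
    aeval u' (mobMon m s b) = (1 - algebraMap R E s * u') ^ m * u ^ b := by
  unfold mobMon
  simp only [map_mul, map_pow, map_add, map_sub, map_one, aeval_X, aeval_C]
  rw [h, mul_pow, mul_assoc, ← pow_add, show b + (m - b) = m by omega, mul_comm]

/-- Möbius transform of a univariate polynomial. -/
noncomputable def mob1 {R : Type*} [CommRing R] (d : ℕ) (s : R) (p : R[X]) : R[X] :=
  ∑ a ∈ Finset.range (d + 1), C (p.coeff a) * mobMon d s a

theorem mob1_natDegree {R : Type*} [CommRing R] (d : ℕ) (s : R) (p : R[X]) :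
    (mob1 d s p).natDegree ≤ d := by
  unfold mob1
  apply natDegree_sum_le_of_forall_le
  intro a ha
  exact (natDegree_C_mul_le _ _).trans (mobMon_natDegree _ _ _ (by simp at ha; omega))

theorem mob1_aeval {R E : Type*} [CommRing R] [Field E] [Algebra R E] (d : ℕ) (s : R) (p : R[X])
    (hp : p.natDegree ≤ d) (u u' : E)
    (h : u' + algebraMap R E s = u * (1 - algebraMap R E s * u')) :
    aeval u' (mob1 d s p) = (1 - algebraMap R E s * u') ^ d * aeval u p := by
  unfold mob1
  rw [aeval_eq_sum_range' (Nat.lt_succ_of_le hp), map_sum, Finset.mul_sum]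
  apply Finset.sum_congr rfl
  intro a ha
  rw [map_mul, mobMon_aeval d s a (by simp at ha; omega) u u' h, aeval_C, Algebra.smul_def]
  ring

/-- Möbius transform of a bivariate polynomial. -/
noncomputable def mob2 {F : Type*} [Field F] (d m : ℕ) (s : F) (p : F[X][Y]) : F[X][Y] :=
  ∑ b ∈ Finset.range (m + 1), C (mob1 d s (p.coeff b)) * mobMon m (C s) b

theorem mob2_eval {F E : Type*} [Field F] [Field E] [Algebra F E] (d m : ℕ) (s : F) (p : F[X][Y])
    (hp : ∀ j, (p.coeff j).natDegree ≤ d) (hm : p.natDegree ≤ m) (u u' v v' : E)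
    (h : u' + algebraMap F E s = u * (1 - algebraMap F E s * u'))
    (h' : v' + algebraMap F E s = v * (1 - algebraMap F E s * v')) :
    aevalAeval u' v' (mob2 d m s p) = (1 - algebraMap F E s * u') ^ d *
      (1 - algebraMap F E s * v') ^ m * aevalAeval u v p := by
  have e : ∀ b ≤ m, aevalAeval u' v' (mobMon m (C s) b) =
      (1 - algebraMap F E s * v') ^ m * v ^ b := by
    intro b hb
    rw [← mobMon_aeval m s b hb v v' h']
    unfold mobMon
    simp only [map_mul, map_pow, map_add, map_sub, map_one, aeval_X, aeval_C, aevalAeval_C,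
      aevalAeval_Y]
  unfold mob2
  rw [map_sum]
  conv_rhs => rw [as_sum_range_C_mul_X_pow' p (Nat.lt_succ_of_le hm)]
  rw [map_sum, Finset.mul_sum]
  apply Finset.sum_congr rfl
  intro b hb
  rw [map_mul, map_mul, map_pow, e b (by simp at hb; omega), aevalAeval_C, aevalAeval_C, 
    aevalAeval_Y, mob1_aeval d s _ (hp b) u u' h]
  ring

theorem evalX_eval {F : Type*} [Field F] (d m : ℕ) (p : F[X][Y])
    (hp : ∀ j, (p.coeff j).natDegree ≤ d) (hm : p.natDegree ≤ m) (r : F) :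
    (p.eval X).eval r = ∑ b ∈ Finset.range (m + 1), ∑ a ∈ Finset.range (d + 1),
      (p.coeff b).coeff a * r ^ a * r ^ b := by
  rw [eval_eq_sum_range' (Nat.lt_succ_of_le hm), eval_finsetSum]
  apply Finset.sum_congr rfl
  intro b _
  rw [eval_mul, eval_pow, eval_X, eval_eq_sum_range' (Nat.lt_succ_of_le (hp b)), Finset.sum_mul]

theorem mob2_corner {F : Type*} [Field F] (d m : ℕ) (s : F) (hs : s ≠ 0) (p : F[X][Y])
    (hp : ∀ j, (p.coeff j).natDegree ≤ d) (hm : p.natDegree ≤ m)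
    (h1 : (p.eval X).eval s ≠ 0) (h2 : (p.eval X).eval (- s⁻¹) ≠ 0) :
    Corner (mob2 d m s p) d m := by
  refine ⟨?_, ?_, ?_, ?_⟩
  · convert h1
    rw [evalX_eval d m p hp hm]
    unfold mob2 mob1
    simp only [finsetSum_coeff, coeff_C_mul, mobMon_coeff_zero, Finset.sum_mul, ← C_pow, 
      coeff_mul_C]
  · intro j
    unfold mob2
    simp only [finsetSum_coeff, coeff_C_mul]
    apply natDegree_sum_le_of_forall_le
    intro b hb
    have : (mobMon m (C s : F[X]) b) = (mobMon m s b).map C := by simp [mobMon]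
    rw [this, coeff_map]
    exact (natDegree_mul_C_le _ _).trans (mob1_natDegree _ _ _)
  · unfold mob2
    apply natDegree_sum_le_of_forall_le
    intro a ha
    exact (natDegree_C_mul_le _ _).trans (mobMon_natDegree _ _ _ (by simp at ha; omega))
  · have : ((mob2 d m s p).coeff m).coeff d = (-s)^(d+m) * (p.eval X).eval (- s⁻¹) := by
      rw [evalX_eval d m p hp hm]
      unfold mob2 mob1
      simp only [finsetSum_coeff, coeff_C_mul, Finset.sum_mul, Finset.mul_sum]
      apply Finset.sum_congr rfl
      intro b hb
      apply Finset.sum_congr rfl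
      intro a ha
      simp only [Finset.mem_range] at ha hb
      rw [mobMon_coeff _ _ _ (by omega), ← C_neg, ← C_pow, coeff_mul_C, coeff_C_mul,
        mobMon_coeff _ _ _ (by omega)]
      have e1 : (-s)^(d+m) = (-s)^(d-a) * (-s)^(m-b) * ((-s)^a * (-s)^b) := by
        rw [← pow_add, ← pow_add, ← pow_add]; congr 1; omega
      have e2 : (-s)^a * (-s⁻¹)^a = 1 := by rw [← mul_pow]; simp [hs]
      have e3 : (-s)^b * (-s⁻¹)^b = 1 := by rw [← mul_pow]; simp [hs]
      rw [e1]
      linear_combination (-(p.coeff b).coeff a * (-s)^(d-a) * (-s)^(m-b)) * (e2 * ((-s)^b * (-s⁻¹)^b) + e3)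
    rw [this]
    exact mul_ne_zero (pow_ne_zero _ (neg_ne_zero.2 hs)) h2

open scoped algebraAdjoinAdjoin in
theorem isAlg_adjoin_iff {F E : Type*} [Field F] [Field E] [Algebra F E] (S : Set E) :
    Algebra.IsAlgebraic (Algebra.adjoin F S) E ↔ Algebra.IsAlgebraic (adjoin F S) E :=
  IsFractionRing.comap_isAlgebraic_iff

theorem no_rel_finrank {F E : Type*} [Field F] [Field E] [Algebra F E] (u v : E)
    (h : ∀ p : F[X][Y], aevalAeval u v p = 0 → p = 0) (w : E) : Module.finrank F⟮w⟯ E = 0 := by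
  by_contra hw
  have hind : AlgebraicIndependent F ![u, v] := by
    rw [algebraicIndependent_iff]
    intro p hp
    have e : ∀ q : F[X][Y], MvPolynomial.aeval ![u, v] (Polynomial.Bivariate.equivMvPolynomial F q) =
        aevalAeval u v q := by
      intro q
      have : ((MvPolynomial.aeval ![u, v]).comp (Polynomial.Bivariate.equivMvPolynomial F).toAlgHom) =
        aevalAeval u v := by
        ext <;> simp
      exact DFunLike.congr_fun this q
    obtain ⟨q, rfl⟩ := (Polynomial.Bivariate.equivMvPolynomial F).surjective p
    rw [e] at hp
    rw [h q hp, map_zero]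
  have h2 := hind.lift_cardinalMk_le_trdeg
  have : FiniteDimensional F⟮w⟯ E := Module.finite_of_finrank_pos (Nat.pos_of_ne_zero hw)
  have h3 : Algebra.IsAlgebraic (Algebra.adjoin F {w}) E := by
    have : Algebra.IsAlgebraic F⟮w⟯ E := inferInstance
    exact (isAlg_adjoin_iff _).2 this
  have h4 := Algebra.IsAlgebraic.trdeg_le_cardinalMk F ({w} : Set E)
  rw [Cardinal.mk_singleton] at h4
  have := h2.trans (Cardinal.lift_le.2 h4)
  simp at this

theorem alg_finrank {F E : Type*} [Field F] [Field E] [Algebra F E] 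
    (hE : ¬ Algebra.IsAlgebraic F E) (w : E) (hw : IsAlgebraic F w) : Module.finrank F⟮w⟯ E = 0 := by
  by_contra h
  have : FiniteDimensional F⟮w⟯ E := Module.finite_of_finrank_pos (Nat.pos_of_ne_zero h)
  have : Algebra.IsAlgebraic F F⟮w⟯ := isAlgebraic_adjoin_simple hw.isIntegral
  exact hE (Algebra.IsAlgebraic.trans F F⟮w⟯ E)

/-- The rotation. -/
def rot {E : Type*} [Field E] (s : ℚ) (u : E) : E := (u - s) / (s * u + 1)

theorem rot_back {E : Type*} [Field E] [CharZero E] (s : ℚ) (u : E) (h : (s : E) * u + 1 ≠ 0) :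
    rot s u + s = u * (1 - s * rot s u) := by
  unfold rot
  have : (s : E) * u + 1 = 1 + s * u := add_comm _ _
  have h' : (1 + s * u : E) ≠ 0 := this ▸ h
  rw [← sub_eq_zero]
  have e : (u - s) / (s * u + 1) + s - u * (1 - s * ((u - s) / (s * u + 1))) =
    (u - s) / (s * u + 1) * (s * u + 1) - (u - s) := by ring
  rw [e, div_mul_cancel₀ _ h, sub_self]

theorem rot_den {E : Type*} [Field E] [CharZero E] (s : ℚ) (u : E) (h : (s : E) * u + 1 ≠ 0) :
    1 - s * rot s u ≠ 0 := by
  have : (1 + s^2 : ℚ) ≠ 0 := by positivity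
  have h2 : (1 + s^2 : E) ≠ 0 := by exact_mod_cast this
  intro h3
  apply h2
  unfold rot at h3
  field_simp at h3
  linear_combination h3

theorem adjoin_rot {F E : Type*} [Field F] [Field E] [Algebra F E] [CharZero E] (s : ℚ) (u : E)
    (h : (s : E) * u + 1 ≠ 0) : F⟮rot s u⟯ = F⟮u⟯ := by
  apply le_antisymm
  · rw [adjoin_simple_le_iff]
    have hu := mem_adjoin_simple_self F u
    have hs : (s : E) ∈ F⟮u⟯ := SubfieldClass.ratCast_mem _ _
    exact div_mem (sub_mem hu hs) (add_mem (mul_mem hs hu) (one_mem _))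
  · rw [adjoin_simple_le_iff]
    have hu := mem_adjoin_simple_self F (rot s u)
    have hs : (s : E) ∈ F⟮rot s u⟯ := SubfieldClass.ratCast_mem _ _
    have : u = (rot s u + s) / (1 - s * rot s u) := by
      rw [rot_back s u h, mul_div_cancel_right₀ _ (rot_den s u h)]
    have h3 := div_mem (add_mem hu hs) (sub_mem (one_mem _) (mul_mem hs hu))
    rwa [← this] at h3

theorem eventually_rot {E : Type*} [Field E] [CharZero E] (u : E) :
    ∀ᶠ s : ℚ in Filter.cofinite, (s : E) * u + 1 ≠ 0 ∧ u ≠ s := by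
  have h1 : {s : ℚ | (s : E) * u + 1 = 0}.Finite := by
    apply Set.Subsingleton.finite
    intro a ha b hb
    simp only [Set.mem_ofPred_eq] at ha hb
    have hu : u ≠ 0 := by rintro rfl; simp at ha
    have : (a : E) = b := mul_right_cancel₀ hu (by linear_combination ha - hb)
    exact_mod_cast this
  have h2 : {s : ℚ | u = s}.Finite := by
    apply Set.Subsingleton.finite
    intro a ha b hb
    simp only [Set.mem_ofPred_eq] at ha hb
    exact_mod_cast ha.symm.trans hb
  filter_upwards [h1.compl_mem_cofinite, h2.compl_mem_cofinite] with s a b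
  exact ⟨a, b⟩

theorem curve_lemma {F E : Type*} [Field F] [Field E] [Algebra F E] [CharZero F] [CharZero E]
    (hE : ¬ Algebra.IsAlgebraic F E) (u v : E) (huv : u ≠ v) :
    ∀ᶠ s : ℚ in Filter.cofinite, 
      Module.finrank F⟮rot s u / rot s v⟯ E = Module.finrank F⟮u⟯ E + Module.finrank F⟮v⟯ E := by
  by_cases hnot : IsAlgebraic F u ∧ IsAlgebraic F v
  · refine Filter.Eventually.of_forall fun s => ?_
    have hs : IsAlgebraic F (s : E) := by
      have := isAlgebraic_algebraMap (A := E) (s : F); simpa using this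
    have hr : ∀ u : E, IsAlgebraic F u → IsAlgebraic F (rot s u) := by
      intro u hu
      unfold rot
      rw [div_eq_mul_inv]
      exact (hu.sub hs).mul ((hs.mul hu).add isAlgebraic_one).inv
    rw [alg_finrank hE _ hnot.1, alg_finrank hE _ hnot.2, alg_finrank hE]
    rw [div_eq_mul_inv]
    exact (hr _ hnot.1).mul (hr _ hnot.2).inv
  by_cases hrel : ∀ p : F[X][Y], aevalAeval u v p = 0 → p = 0
  · refine Filter.Eventually.of_forall fun s => ?_
    rw [no_rel_finrank u v hrel, no_rel_finrank u v hrel, no_rel_finrank u v hrel]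
  push Not at hrel
  obtain ⟨p, hp, hp0⟩ := hrel
  obtain ⟨Φ, hirr, hΦ⟩ := exists_irred u v p hp0 hp
  have hD : Φ.eval X ≠ 0 := by
    intro h
    have h1 : (X - C X : F[X][Y]) ∣ Φ := dvd_iff_isRoot.2 h
    have h2 := (irreducible_X_sub_C (X : F[X]))
    have h3 : Associated (X - C X : F[X][Y]) Φ := h2.associated_of_dvd hirr h1
    obtain ⟨c, hc⟩ := h3.dvd'
    apply huv
    have := congrArg (aevalAeval u v) hc
    rw [map_mul, hΦ, zero_mul, map_sub, aevalAeval_Y, aevalAeval_X] at this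
    exact (sub_eq_zero.1 this).symm
  have hf1 : {s : ℚ | (Φ.eval X).eval (s : F) = 0}.Finite := by
    have : {r : F | (Φ.eval X).eval r = 0}.Finite := by
      exact finite_setOfPred_isRoot hD
    exact this.preimage (Rat.cast_injective.injOn)
  have hf2 : {s : ℚ | (Φ.eval X).eval (-(s : F)⁻¹) = 0}.Finite := by
    have : {r : F | (Φ.eval X).eval r = 0}.Finite := by
      exact finite_setOfPred_isRoot hD
    refine this.preimage (f := fun s : ℚ => -(s : F)⁻¹) (Function.Injective.injOn ?_)
    intro a b h
    simpa using h
  filter_upwards [hf1.compl_mem_cofinite, hf2.compl_mem_cofinite, eventually_rot u,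
    eventually_rot v, (Set.finite_singleton (0:ℚ)).compl_mem_cofinite] with s h1 h2 h3 h4 h5
  rw [← adjoin_rot s u h3.1, ← adjoin_rot s v h4.1]
  have hs : (s : F) ≠ 0 := by exact_mod_cast h5
  refine curve_core _ _ (div_ne_zero (sub_ne_zero.2 h3.2) h3.1) 
    (div_ne_zero (sub_ne_zero.2 h4.2) h4.1) ?_ _ 
    (mob2_corner _ _ (s : F) hs Φ (coeff_natDegree_le_swap Φ) le_rfl h1 h2) ?_
  · rintro ⟨a, b⟩
    apply hnot
    have := isAlgebraic_adjoin_simple a.isIntegral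
    rw [adjoin_rot s u h3.1] at this
    have h' := isAlgebraic_adjoin_simple b.isIntegral
    rw [adjoin_rot s v h4.1] at h'
    exact ⟨isAlgebraic_iff.1 (this.isAlgebraic (AdjoinSimple.gen F u)),
      isAlgebraic_iff.1 (h'.isAlgebraic (AdjoinSimple.gen F v))⟩
  · rw [mob2_eval _ _ (s : F) Φ (coeff_natDegree_le_swap Φ) le_rfl u _ v _ 
      (by simpa using rot_back s u h3.1) (by simpa using rot_back s v h4.1), hΦ, mul_zero]

end Part3

section Part4
open Polynomial IntermediateField
open scoped Polynomial.Bivariate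

theorem odd_springer {F : Type*} [Field F] (hF : ∀ a b : F, a ^ 2 + b ^ 2 ≠ -1) (n : ℕ) :
    ∀ (f A B : F[X]), f.natDegree = n → Odd n → ¬ f ∣ A ^ 2 + B ^ 2 + 1 := by
  induction n using Nat.strong_induction_on with
  | _ n ih =>
    intro f A B hn hodd hdvd
    have hnpos : 0 < n := hodd.pos
    have hf0 : f ≠ 0 := by rintro rfl; simp at hn; omega
    have hz : ∀ a b : F, a ^ 2 + b ^ 2 = 0 → b = 0 := by
      intro a b h
      by_contra hb
      apply hF (a / b) 0
      field_simp
      linear_combination h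
    set A1 := A % f with hA1
    set B1 := B % f with hB1
    have hd1 : f ∣ A1 ^ 2 + B1 ^ 2 + 1 := by
      have e1 := EuclideanDomain.div_add_mod A f
      have e2 := EuclideanDomain.div_add_mod B f
      have : A1 ^ 2 + B1 ^ 2 + 1 = (A ^ 2 + B ^ 2 + 1) - f * ((A / f) * (A + A1) + (B / f) * (B + B1)) := by
        linear_combination ((A + A1)) * e1 + (B + B1) * e2
      rw [this]
      exact dvd_sub hdvd (dvd_mul_right _ _)
    have hA : A1.natDegree < n := hn ▸ natDegree_mod_lt A (by omega)
    have hB : B1.natDegree < n := hn ▸ natDegree_mod_lt B (by omega)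
    obtain ⟨m, hm, hAm, hBm, hor⟩ : ∃ m < n, A1.natDegree ≤ m ∧ B1.natDegree ≤ m ∧
        (m = A1.natDegree ∨ m = B1.natDegree) := by
      rcases le_total A1.natDegree B1.natDegree with h | h
      · exact ⟨_, hB, h, le_rfl, Or.inr rfl⟩
      · exact ⟨_, hA, le_rfl, h, Or.inl rfl⟩
    have hN : (A1 ^ 2 + B1 ^ 2 + 1).natDegree = 2 * m ∧ A1 ^ 2 + B1 ^ 2 + 1 ≠ 0 := by
      by_cases hm0 : m = 0
      · subst hm0
        have hA' := eq_C_of_natDegree_le_zero hAm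
        have hB' := eq_C_of_natDegree_le_zero hBm
        rw [hA', hB']
        have : (C (A1.coeff 0) ^ 2 + C (B1.coeff 0) ^ 2 + 1 : F[X]) =
          C (A1.coeff 0 ^ 2 + B1.coeff 0 ^ 2 + 1) := by simp
        rw [this]
        refine ⟨natDegree_C _, ?_⟩
        rw [Ne, C_eq_zero]
        intro h
        exact hF _ _ (eq_neg_of_add_eq_zero_left h)
      · have hc : (A1 ^ 2 + B1 ^ 2 + 1).coeff (2 * m) = (A1.coeff m) ^ 2 + (B1.coeff m) ^ 2 := by
          rw [coeff_add, coeff_add, coeff_pow_of_natDegree_le hAm, coeff_pow_of_natDegree_le hBm,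
            coeff_one, if_neg (by omega), add_zero]
        have hc0 : (A1 ^ 2 + B1 ^ 2 + 1).coeff (2 * m) ≠ 0 := by
          rw [hc]
          intro h
          have hb := hz _ _ h
          have ha := hz _ _ ((add_comm _ _).trans h)
          rcases hor with h1 | h1
          · rw [h1] at ha hm0
            rw [coeff_natDegree, leadingCoeff_eq_zero] at ha
            rw [ha] at hm0; simp at hm0
          · rw [h1] at hb hm0
            rw [coeff_natDegree, leadingCoeff_eq_zero] at hb
            rw [hb] at hm0; simp at hm0
        refine ⟨le_antisymm ?_ (le_natDegree_of_ne_zero hc0), ?_⟩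
        · refine natDegree_add_le_of_degree_le (natDegree_add_le_of_degree_le ?_ ?_) (by simp)
          · exact natDegree_pow_le_of_le 2 hAm
          · exact natDegree_pow_le_of_le 2 hBm
        · intro h; rw [h] at hc0; simp at hc0
    obtain ⟨h, hh⟩ := hd1
    have hh0 : h ≠ 0 := by rintro rfl; exact hN.2 (by rw [hh, mul_zero])
    have hdeg := hN.1
    rw [hh, natDegree_mul hf0 hh0, hn] at hdeg
    have hodd' : Odd h.natDegree := by
      rcases hodd with ⟨c, hc⟩
      exact ⟨m - c - 1, by omega⟩
    exact ih h.natDegree (by omega) h A1 B1 rfl hodd' ⟨f, by rw [hh, mul_comm]⟩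

theorem finrank_two_of_I {A B : Type*} [Field A] [Field B] [Algebra A B] (I : B)
    (hI : I ∉ (algebraMap A B).range) (h : ∀ b : B, ∃ a1 a2 : A, b = algebraMap A B a1 +
      algebraMap A B a2 * I) : Module.finrank A B = 2 := by
  have hli : LinearIndependent A ![1, I] := by
    rw [LinearIndependent.pair_iff]
    intro s t hst
    have ht : t = 0 := by
      by_contra ht
      apply hI
      refine ⟨-s / t, ?_⟩
      have h0 : algebraMap A B t ≠ 0 := by simpa using ht
      rw [map_div₀, map_neg, div_eq_iff h0]
      rw [Algebra.smul_def, Algebra.smul_def] at hst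
      linear_combination -hst
    refine ⟨?_, ht⟩
    rw [ht] at hst
    simpa using hst
  have hsp : ⊤ ≤ Submodule.span A (Set.range ![1, I]) := by
    intro b _
    obtain ⟨a1, a2, rfl⟩ := h b
    simp only [Matrix.range_cons, Matrix.range_empty, Set.union_empty, Set.singleton_union]
    rw [Submodule.mem_span_pair]
    exact ⟨a1, a2, by simp [Algebra.smul_def]⟩
  have := Module.finrank_eq_card_basis (Module.Basis.mk hli hsp)
  simpa using this

theorem even_finrank {L : Type*} [Field L] [CharZero L] (t : L →+* L) (ht : ∀ x, t (t x) = x)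
    (I : L) (hI : I ^ 2 = -1) (htI : t I = - I) (F : Subfield L) (hIF : I ∈ F)
    (htF : ∀ x ∈ F, t x ∈ F) (hno : ∀ y ∈ F, y * t y ≠ -1) (x : L) (hx : x * t x = -1) :
    Even (Module.finrank F L) := by
  have hI0 : I ≠ 0 := by rintro rfl; simp at hI
  have h2 : (2 : L) ≠ 0 := two_ne_zero
  let K : Subfield L := RingHom.eqLocusField t (RingHom.id L)
  have hK : ∀ z, z ∈ K ↔ t z = z := fun z => Iff.rfl
  have hInK : I ∉ K := by
    rw [hK, htI]
    intro h
    apply hI0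
    have : 2 * I = 0 := by linear_combination -h
    simpa using this
  have hdec : ∀ z : L, ∃ a b, a ∈ K ∧ b ∈ K ∧ z = a + b * I ∧ (z ∈ F → a ∈ F ∧ b ∈ F) := by
    intro z
    refine ⟨(z + t z) / 2, (z - t z) / (2 * I), ?_, ?_, ?_, ?_⟩
    · rw [hK, map_div₀, map_add, ht, map_ofNat, add_comm]
    · rw [hK, map_div₀, map_sub, ht, map_mul, map_ofNat, htI]
      field_simp; ring
    · field_simp; ring
    · intro hz
      have h2F : (2 : L) ∈ F := ofNat_mem F 2
      exact ⟨div_mem (add_mem hz (htF z hz)) h2F, 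
        div_mem (sub_mem hz (htF z hz)) (mul_mem h2F hIF)⟩
  let F0 : Subfield L := F ⊓ K
  let F1 : IntermediateField F0 L := Subfield.extendScalars (F := F0) (E := F) inf_le_left
  let K1 : IntermediateField F0 L := Subfield.extendScalars (F := F0) (E := K) inf_le_right
  have e1 : Module.finrank F0 F1 = 2 := by
    apply finrank_two_of_I (⟨I, hIF⟩ : F1)
    · rintro ⟨z, hz⟩
      have := congrArg (fun w : F1 => (w : L)) hz
      change (z : L) = I at this
      exact hInK (this ▸ z.2.2)
    · rintro ⟨z, hz⟩
      obtain ⟨a, b, ha, hb, hzab, hab⟩ := hdec z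
      obtain ⟨ha', hb'⟩ := hab hz
      exact ⟨⟨a, ha', ha⟩, ⟨b, hb', hb⟩, Subtype.ext hzab⟩
  have e2 : Module.finrank K1 L = 2 := by
    apply finrank_two_of_I I
    · rintro ⟨z, hz⟩
      change (z : L) = I at hz
      exact hInK (hz ▸ z.2)
    · intro z
      obtain ⟨a, b, ha, hb, hzab, hab⟩ := hdec z
      exact ⟨⟨a, ha⟩, ⟨b, hb⟩, hzab⟩
  have m1 := Module.finrank_mul_finrank F0 F1 L
  have m2 := Module.finrank_mul_finrank F0 K1 L
  rw [e1] at m1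
  rw [e2] at m2
  have m3 : Module.finrank F L = Module.finrank F0 K1 := by
    have : Module.finrank F L = Module.finrank F1 L := rfl
    omega
  rw [m3]
  by_contra hodd
  rw [Nat.not_even_iff_odd] at hodd
  have : FiniteDimensional F0 K1 := Module.finite_of_finrank_pos hodd.pos
  obtain ⟨θ, hθ⟩ := Field.exists_primitive_element F0 K1
  have hintegral : IsIntegral F0 θ := Algebra.IsIntegral.isIntegral θ
  have hdeg : (minpoly F0 θ).natDegree = Module.finrank F0 K1 := by
    rw [← adjoin.finrank hintegral, hθ]
    exact IntermediateField.finrank_top'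
  have hpoly : ∀ z : K1, ∃ A : F0[X], aeval θ A = z := by
    intro z
    have : z ∈ F0⟮θ⟯ := by rw [hθ]; trivial
    rw [← mem_toSubalgebra, adjoin_simple_toSubalgebra_of_isAlgebraic hintegral.isAlgebraic, 
      Algebra.adjoin_singleton_eq_range_aeval] at this
    exact this
  obtain ⟨a, b, ha, hb, hxab, -⟩ := hdec x
  obtain ⟨A, hA⟩ := hpoly ⟨a, ha⟩
  obtain ⟨B, hB⟩ := hpoly ⟨b, hb⟩
  refine odd_springer ?_ _ (minpoly F0 θ) A B hdeg hodd ?_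
  · rintro ⟨c, hcF, hcK⟩ ⟨d, hdF, hdK⟩ h
    have h' := congrArg (fun w : F0 => (w : L)) h
    change c ^ 2 + d ^ 2 = -1 at h'
    apply hno (c + d * I) (add_mem hcF (mul_mem hdF hIF))
    replace hcK : t c = c := hcK
    replace hdK : t d = d := hdK
    rw [map_add, map_mul, hcK, hdK, htI]
    linear_combination h' - d^2 * hI
  · apply minpoly.dvd
    rw [map_add, map_add, map_pow, map_pow, hA, hB, map_one]
    apply Subtype.ext
    change a ^ 2 + b ^ 2 + 1 = 0
    rw [hK] at ha hb
    rw [hxab, map_add, map_mul, ha, hb, htI] at hx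
    linear_combination hx + b^2 * hI

end Part4

section Part5
open Polynomial IntermediateField
open scoped Polynomial.Bivariate

/-- The degree of `L` over `k(S)` (zero when infinite). -/
noncomputable def degOver (k : Type*) {L : Type*} [Field k] [Field L] [Algebra k L] (S : Set L) : ℕ :=
  Module.finrank (adjoin k S) L

theorem degOver_insert {k L : Type*} [Field k] [Field L] [Algebra k L] (S : Set L) (e : L) :
    degOver k (insert e S) = Module.finrank (adjoin k S)⟮e⟯ L := by
  unfold degOver
  rw [← Set.union_singleton, ← adjoin_adjoin_left]
  rfl

/-- The `t`-fixed combination. -/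
def wfun {E : Type*} [Field E] (I : E) (s : ℚ) (u v : E) : E :=
  I * (rot s u + rot s v) / (rot s u - rot s v)

theorem rot_ne {E : Type*} [Field E] [CharZero E] (s : ℚ) (u v : E) (huv : u ≠ v)
    (hu : (s : E) * u + 1 ≠ 0) (hv : (s : E) * v + 1 ≠ 0) : rot s u ≠ rot s v := by
  intro h
  have h1 := rot_back s u hu
  have h2 := rot_back s v hv
  rw [h] at h1
  exact huv (mul_right_cancel₀ (rot_den s v hv) (h1.symm.trans h2))

theorem adjoin_wfun {F E : Type*} [Field F] [Field E] [Algebra F E] [CharZero E] (I : F)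
    (hI : I ^ 2 = -1) (s : ℚ) (u v : E) (huv : u ≠ v)
    (hu : (s : E) * u + 1 ≠ 0) (hv : (s : E) * v + 1 ≠ 0) (hvs : v ≠ s) :
    F⟮wfun (algebraMap F E I) s u v⟯ = F⟮rot s u / rot s v⟯ := by
  have hI0 : algebraMap F E I ≠ 0 := by
    intro h
    have : I = 0 := by simpa using h
    rw [this] at hI; simp at hI
  have hv0 : rot s v ≠ 0 := div_ne_zero (sub_ne_zero.2 hvs) hv
  have hd : rot s u - rot s v ≠ 0 := sub_ne_zero.2 (rot_ne s u v huv hu hv)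
  unfold wfun
  generalize hU : rot s u = U at *
  generalize hV : rot s v = V at *
  generalize hJ : algebraMap F E I = J at *
  have hJm : ∀ (M : IntermediateField F E), J ∈ M := fun M => hJ ▸ M.algebraMap_mem I
  apply le_antisymm
  · rw [adjoin_simple_le_iff]
    have hr := mem_adjoin_simple_self F (U / V)
    have : J * (U + V) / (U - V) = J * (U / V + 1) / (U / V - 1) := by
      have h1 : U / V + 1 = (U + V) / V := by field_simp
      have h2 : U / V - 1 = (U - V) / V := by field_simp
      rw [h1, h2]; field_simp
    rw [this]
    exact div_mem (mul_mem (hJm _) (add_mem hr (one_mem _))) (sub_mem hr (one_mem _))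
  · rw [adjoin_simple_le_iff]
    have hr := mem_adjoin_simple_self F (J * (U + V) / (U - V))
    have : U / V = (J * (U + V) / (U - V) + J) / (J * (U + V) / (U - V) - J) := by
      have h1 : J * (U + V) / (U - V) + J = 2 * J * U / (U - V) := by field_simp; ring
      have h2 : J * (U + V) / (U - V) - J = 2 * J * V / (U - V) := by field_simp; ring
      rw [h1, h2]; field_simp
    rw [this]
    exact div_mem (add_mem hr (hJm _)) (sub_mem hr (hJm _))

theorem wfun_fixed {E : Type*} [Field E] [CharZero E] (t : E →+* E) (I : E) (htI : t I = - I)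
    (s : ℚ) (u v : E) (huv : u ≠ v) (htu : u * t u = -1) (htv : v * t v = -1)
    (hu : (s : E) * u + 1 ≠ 0 ∧ u ≠ s) (hv : (s : E) * v + 1 ≠ 0 ∧ v ≠ s) :
    t (wfun I s u v) = wfun I s u v := by
  have key : ∀ u : E, u * t u = -1 → ((s : E) * u + 1 ≠ 0 ∧ u ≠ s) → t (rot s u) = - (rot s u)⁻¹ := by
    intro u htu hu
    have h0 : u ≠ 0 := by rintro rfl; simp at htu
    have h1 : t u = - u⁻¹ := by field_simp; linear_combination htu
    have h2 : u - s ≠ 0 := sub_ne_zero.2 hu.2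
    have h3 : (s : E) * (- u⁻¹) + 1 = (u - s) / u := by field_simp; ring
    have h4 : (- u⁻¹ - s : E) = - (s * u + 1) / u := by field_simp; ring
    unfold rot
    rw [map_div₀, map_sub, map_add, map_mul, map_ratCast, map_one, h1, h3, h4]
    have := hu.1
    rw [inv_div]
    rw [div_div_div_cancel_right₀ h0, neg_div]
  have hu0 : rot s u ≠ 0 := div_ne_zero (sub_ne_zero.2 hu.2) hu.1
  have hv0 : rot s v ≠ 0 := div_ne_zero (sub_ne_zero.2 hv.2) hv.1
  have hd : rot s u - rot s v ≠ 0 := sub_ne_zero.2 (rot_ne s u v huv hu.1 hv.1)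
  unfold wfun
  rw [map_div₀, map_mul, map_add, map_sub, htI, key u htu hu, key v htv hv]
  generalize rot s u = U at *
  generalize rot s v = V at *
  have h1 : -U⁻¹ - -V⁻¹ = (U - V) / (U * V) := by field_simp; ring
  have h2 : -I * (-U⁻¹ + -V⁻¹) = I * (U + V) / (U * V) := by field_simp; ring
  rw [h1, h2, div_div_div_cancel_right₀ (mul_ne_zero hu0 hv0)]

theorem not_alg_of_card {k L : Type*} [Field k] [Field L] [Algebra k L] {ι : Type*} [Fintype ι]
    (x : ι → L) (hx : AlgebraicIndependent k x) (S : Finset L) (hS : S.card < Fintype.card ι) :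
    ¬ Algebra.IsAlgebraic (adjoin k (S : Set L)) L := by
  intro h
  have := (isAlg_adjoin_iff _).2 h
  have h4 := Algebra.IsAlgebraic.trdeg_le_cardinalMk k (S : Set L)
  have h2 := hx.lift_cardinalMk_le_trdeg
  have := h2.trans (Cardinal.lift_le.2 h4)
  simp at this
  omega

theorem curve_step {k L : Type*} [Field k] [Field L] [Algebra k L] [CharZero k] [CharZero L]
    {ι : Type*} [Fintype ι] (I : k) (hI : I ^ 2 = -1)
    (x : ι → L) (hx : AlgebraicIndependent k x) (S : Finset L) (hS : S.card < Fintype.card ι)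
    (u v : L) (huv : u ≠ v) :
    ∀ᶠ s : ℚ in Filter.cofinite, degOver k (insert (wfun (algebraMap k L I) s u v) (S : Set L)) =
      degOver k (insert u (S : Set L)) + degOver k (insert v (S : Set L)) := by
  have hE := not_alg_of_card x hx S hS
  have : CharZero (adjoin k (S : Set L)) := charZero_of_injective_algebraMap (algebraMap k _).injective
  filter_upwards [curve_lemma hE u v huv, eventually_rot u, eventually_rot v] with s h1 h2 h3
  rw [degOver_insert, degOver_insert, degOver_insert, ← h1]
  rw [← adjoin_wfun (algebraMap k (adjoin k (S : Set L)) I) (by rw [← map_pow, hI]; simp) s u v huv 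
    h2.1 h3.1 h3.2]
  rfl

/-- Mixture of three families. -/
noncomputable def mix {ι L : Type*} [DecidableEq ι] (x y w : ι → L) (T S : Finset ι) (h : ι) : L :=
  if h ∈ T then w h else if h ∈ S then y h else x h

theorem range_update_fin {ι L : Type*} [Fintype ι] [DecidableEq ι] [DecidableEq L] (z : ι → L)
    (a : ι) : Set.range z = insert (z a) (((Finset.univ.erase a).image z : Finset L) : Set L) := by
  ext e
  simp only [Set.mem_range, Finset.coe_image, Finset.coe_erase, Finset.coe_univ, Set.mem_insert_iff,
    Set.mem_image, Set.mem_sdiff, Set.mem_univ, Set.mem_singleton_iff, true_and]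
  constructor
  · rintro ⟨h, rfl⟩
    by_cases hh : h = a
    · left; rw [hh]
    · right; exact ⟨h, hh, rfl⟩
  · rintro (rfl | ⟨h, -, rfl⟩)
    · exact ⟨a, rfl⟩
    · exact ⟨h, rfl⟩

theorem expansion {k L : Type*} [Field k] [Field L] [Algebra k L] [CharZero k] [CharZero L]
    {ι : Type*} [Fintype ι] [DecidableEq ι] (I : k) (hI : I ^ 2 = -1) (t : L →+* L)
    (htI : t (algebraMap k L I) = - algebraMap k L I)
    (x y : ι → L) (hx : AlgebraicIndependent k x) (hxy : ∀ h, x h ≠ y h)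
    (hxt : ∀ h, x h * t (x h) = -1) (hyt : ∀ h, y h * t (y h) = -1) (T : Finset ι) :
    ∃ w : ι → L, (∀ h ∈ T, t (w h) = w h) ∧
      ∑ S ∈ (Finset.univ : Finset ι).powerset, degOver k (Set.range (mix x y w ∅ S)) =
      ∑ S ∈ (Tᶜ).powerset, degOver k (Set.range (mix x y w T S)) := by
  classical
  induction T using Finset.induction_on with
  | empty => exact ⟨x, by simp, by simp⟩
  | insert a T ha ih =>
    obtain ⟨w, hw, hsum⟩ := ih
    have hTc : Tᶜ = insert a ((insert a T)ᶜ) := by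
      ext h; simp only [Finset.mem_compl, Finset.mem_insert]
      by_cases hh : h = a
      · subst hh; simp [ha]
      · simp [hh]
    have hcardpos : 0 < Fintype.card ι := Fintype.card_pos_iff.2 ⟨a⟩
    have hev : ∀ᶠ s : ℚ in Filter.cofinite, ∀ S ∈ ((insert a T)ᶜ).powerset,
        degOver k (insert (wfun (algebraMap k L I) s (x a) (y a)) 
          (((Finset.univ.erase a).image (mix x y w T S) : Finset L) : Set L)) =
        degOver k (insert (x a) (((Finset.univ.erase a).image (mix x y w T S) : Finset L) : Set L)) +
        degOver k (insert (y a) (((Finset.univ.erase a).image (mix x y w T S) : Finset L) : Set L)) := by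
      rw [Filter.eventually_all_finset]
      intro S _
      apply curve_step I hI x hx _ _ _ _ (hxy a)
      refine Finset.card_image_le.trans_lt ?_
      rw [Finset.card_erase_of_mem (Finset.mem_univ _), Finset.card_univ]
      omega
    obtain ⟨s, hs, hsx, hsy⟩ := (hev.and ((eventually_rot (x a)).and (eventually_rot (y a)))).exists
    refine ⟨Function.update w a (wfun (algebraMap k L I) s (x a) (y a)), ?_, ?_⟩
    · intro h hh
      by_cases hha : h = a
      · subst hha
        rw [Function.update_self]
        exact wfun_fixed t _ htI s _ _ (hxy h) (hxt h) (hyt h) hsx hsy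
      · rw [Function.update_of_ne hha]
        exact hw h ((Finset.mem_insert.1 hh).resolve_left hha)
    · have e0 : ∀ S, mix x y (Function.update w a (wfun (algebraMap k L I) s (x a) (y a))) ∅ S =
          mix x y w ∅ S := by intro S; ext h; simp [mix]
      simp only [e0]
      rw [hsum, hTc, Finset.sum_powerset_insert (by simp), ← Finset.sum_add_distrib]
      apply Finset.sum_congr rfl
      intro S hS
      have haS : a ∉ S := by
        intro h
        have := Finset.mem_powerset.1 hS h
        simp at this
      rw [range_update_fin (mix x y w T S) a, range_update_fin (mix x y w T (insert a S)) a,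
        range_update_fin (mix x y (Function.update w a (wfun (algebraMap k L I) s (x a) (y a)))
          (insert a T) S) a]
      have i1 : (Finset.univ.erase a).image (mix x y w T (insert a S)) = 
          (Finset.univ.erase a).image (mix x y w T S) := by
        apply Finset.image_congr
        intro h hh
        have : h ≠ a := by simpa using hh
        simp [mix, this]
      have i2 : (Finset.univ.erase a).image (mix x y (Function.update w a 
          (wfun (algebraMap k L I) s (x a) (y a))) (insert a T) S) = 
          (Finset.univ.erase a).image (mix x y w T S) := by
        apply Finset.image_congr
        intro h hh
        have : h ≠ a := by simpa using hh
        simp [mix, this]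
      rw [i1, i2]
      have j1 : mix x y w T S a = x a := by simp [mix, ha, haS]
      have j2 : mix x y w T (insert a S) a = y a := by simp [mix, ha]
      have j3 : mix x y (Function.update w a (wfun (algebraMap k L I) s (x a) (y a)))
          (insert a T) S a = wfun (algebraMap k L I) s (x a) (y a) := by simp [mix]
      rw [j1, j2, j3]
      exact (hs S hS).symm

end Part5

section Part6
open Polynomial IntermediateField
open scoped Polynomial.Bivariate

theorem algIndep_of_degOver {k L : Type*} [Field k] [Field L] [Algebra k L] {ι : Type*} [Fintype ι]
    (x : ι → L) (hx : AlgebraicIndependent k x) (w : ι → L) (h : degOver k (Set.range w) ≠ 0) :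
    AlgebraicIndependent k w := by
  have : FiniteDimensional (adjoin k (Set.range w)) L :=
    Module.finite_of_finrank_pos (Nat.pos_of_ne_zero h)
  have h1 : Algebra.IsAlgebraic (Algebra.adjoin k (Set.range w)) L :=
    (isAlg_adjoin_iff _).2 inferInstance
  exact (Algebra.IsAlgebraic.isTranscendenceBasis_of_lift_le_trdeg_of_finite k w 
    hx.lift_cardinalMk_le_trdeg).1

theorem no_norm {k L : Type*} [Field k] [Field L] [Algebra k L] [CharZero k] 
    {ι : Type*} [Fintype ι] (t : L →+* L) (cj : k →+* k)
    (htk : ∀ c, t (algebraMap k L c) = algebraMap k L (cj c)) (σ : k →+* ℂ)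
    (hσ : ∀ c, σ (cj c) = star (σ c)) (w : ι → L) (hw : AlgebraicIndependent k w)
    (hwt : ∀ h, t (w h) = w h) (y : L) (hy : y ∈ adjoin k (Set.range w)) : y * t y ≠ -1 := by
  intro hyt
  obtain ⟨p, q, rfl⟩ := (mem_adjoin_range_iff k w y).1 hy
  have ht : ∀ p : MvPolynomial ι k, t (MvPolynomial.aeval w p) = 
      MvPolynomial.aeval w (MvPolynomial.map cj p) := by
    intro p
    induction p using MvPolynomial.induction_on with
    | C a => simp [htk]
    | add p q hp hq => simp [hp, hq]
    | mul_X p i hp => simp [hp, hwt]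
  have hq : MvPolynomial.aeval w q ≠ 0 := by
    intro h; rw [h] at hyt; simp at hyt
  have hq' : t (MvPolynomial.aeval w q) ≠ 0 := (map_ne_zero t).2 hq
  rw [map_div₀] at hyt
  have h1 : MvPolynomial.aeval w p * t (MvPolynomial.aeval w p) + 
      MvPolynomial.aeval w q * t (MvPolynomial.aeval w q) = 0 := by
    field_simp at hyt
    linear_combination hyt
  rw [ht, ht, ← map_mul, ← map_mul, ← map_add] at h1
  have h2 := (algebraicIndependent_iff.1 hw) _ h1
  apply hq
  have : q = 0 := by
    apply MvPolynomial.funext_set (fun _ : ι => Set.range (Rat.cast : ℚ → k))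
      (fun _ => Set.infinite_range_of_injective Rat.cast_injective)
    intro r hr
    have hr' : ∀ i, cj (r i) = r i := by
      intro i
      obtain ⟨a, ha⟩ := hr i (Set.mem_univ i)
      rw [← ha, map_ratCast]
    have he : ∀ p : MvPolynomial ι k, MvPolynomial.eval r (MvPolynomial.map cj p) = 
        cj (MvPolynomial.eval r p) := by
      intro p
      induction p using MvPolynomial.induction_on with
      | C a => simp
      | add p q hp hq => simp [hp, hq]
      | mul_X p i hp => simp [hp, hr']
    have h3 := congrArg (fun f => σ (MvPolynomial.eval r f)) h2
    simp only [map_add, map_mul, he, hσ, map_zero] at h3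
    rw [← starRingEnd_apply, ← starRingEnd_apply, Complex.mul_conj, Complex.mul_conj, 
      ← Complex.ofReal_add, Complex.ofReal_eq_zero] at h3
    have n1 := Complex.normSq_nonneg (σ (MvPolynomial.eval r p))
    have n2 := Complex.normSq_nonneg (σ (MvPolynomial.eval r q))
    have n3 : Complex.normSq (σ (MvPolynomial.eval r q)) = 0 := by linarith
    rw [Complex.normSq_eq_zero] at n3
    simpa using n3
  rw [this, map_zero]

theorem degOver_even {k L : Type*} [Field k] [Field L] [Algebra k L] [CharZero k] [CharZero L]
    {ι : Type*} [Fintype ι] (t : L →+* L) (htt : ∀ z, t (t z) = z) (cj : k →+* k)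
    (htk : ∀ c, t (algebraMap k L c) = algebraMap k L (cj c)) (σ : k →+* ℂ)
    (hσ : ∀ c, σ (cj c) = star (σ c)) (I : k) (hI : I ^ 2 = -1)
    (htI : t (algebraMap k L I) = - algebraMap k L I)
    (x : ι → L) (hx : AlgebraicIndependent k x) (w : ι → L)
    (hwt : ∀ h, t (w h) = w h) (z : L) (hz : z * t z = -1) : Even (degOver k (Set.range w)) := by
  by_cases h0 : degOver k (Set.range w) = 0
  · rw [h0]; exact Even.zero
  have hw := algIndep_of_degOver x hx w h0
  apply even_finrank t htt (algebraMap k L I) (by rw [← map_pow, hI]; simp) htI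
    (adjoin k (Set.range w)).toSubfield ((adjoin k (Set.range w)).algebraMap_mem I) ?_ ?_ z hz
  · intro a ha
    have : (adjoin k (Set.range w)).toSubfield ≤ (adjoin k (Set.range w)).toSubfield.comap t := by
      rw [adjoin_toSubfield, Subfield.closure_le]
      rintro b (⟨c, rfl⟩ | ⟨h, rfl⟩)
      · change t (algebraMap k L c) ∈ (adjoin k (Set.range w)).toSubfield
        rw [htk]
        exact (adjoin k (Set.range w)).algebraMap_mem _
      · change t (w h) ∈ (adjoin k (Set.range w)).toSubfield
        rw [hwt]
        exact subset_adjoin k _ ⟨h, rfl⟩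
    exact this ha
  · intro y hy
    exact no_norm t cj htk σ hσ w hw hwt y hy

theorem degOver_map {k L : Type*} [Field k] [Field L] [Algebra k L] (e : L ≃+* L)
    (e0 : k ≃+* k) (he : ∀ c, e (algebraMap k L c) = algebraMap k L (e0 c)) (S : Set L) :
    degOver k (e '' S) = degOver k S := by
  have hm : (adjoin k S).toSubfield.map (e : L →+* L) = (adjoin k (e '' S)).toSubfield := by
    rw [adjoin_toSubfield, adjoin_toSubfield, RingHom.map_field_closure, Set.image_union]
    congr 2
    ext z
    constructor
    · rintro ⟨_, ⟨c, rfl⟩, rfl⟩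
      exact ⟨e0 c, (he c).symm⟩
    · rintro ⟨c, rfl⟩
      refine ⟨_, ⟨e0.symm c, rfl⟩, ?_⟩
      have := he (e0.symm c)
      rw [RingEquiv.apply_symm_apply] at this
      exact this
  have hmem : ∀ z, z ∈ adjoin k S ↔ e z ∈ adjoin k (e '' S) := by
    intro z
    change _ ↔ e z ∈ (adjoin k (e '' S)).toSubfield
    rw [← hm, Subfield.mem_map]
    constructor
    · intro hz; exact ⟨z, hz, rfl⟩
    · rintro ⟨z', hz', h⟩
      have : z' = z := e.injective h
      exact this ▸ hz'
  let i : adjoin k S ≃+* adjoin k (e '' S) :=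
    { toFun := fun z => ⟨e z, (hmem z).1 z.2⟩
      invFun := fun z => ⟨e.symm z, by rw [hmem]; simp⟩
      left_inv := fun z => Subtype.ext (by simp)
      right_inv := fun z => Subtype.ext (by simp)
      map_mul' := fun a b => Subtype.ext (by simp)
      map_add' := fun a b => Subtype.ext (by simp) }
  unfold degOver
  exact (Algebra.finrank_eq_of_equiv_equiv i e (by ext z; rfl)).symm

open scoped Pointwise in
theorem parity_fixed {H : Type*} [Group H] [Fintype H] [DecidableEq H] (hH : IsPGroup 2 H)
    (f : Finset H → ℕ) (hf : ∀ (g : H) S, f (g • S) = f S)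
    (hsum : Even (∑ S ∈ (Finset.univ : Finset H).powerset, f S)) (h1 : Odd (f ∅)) :
    Odd (f Finset.univ) := by
  classical
  by_contra huniv
  let X : SubMulAction H (Finset H) :=
    { carrier := {S | Odd (f S)}
      smul_mem' := fun g S hS => by
        change Odd (f (g • S))
        rw [hf]; exact hS }
  have : Fact (Nat.Prime 2) := ⟨Nat.prime_two⟩
  have key := hH.card_modEq_card_fixedPoints X
  have c1 : Nat.card (MulAction.fixedPoints H X) = 1 := by
    rw [Nat.card_eq_one_iff_unique]
    refine ⟨⟨?_⟩, ⟨⟨⟨∅, h1⟩, ?_⟩⟩⟩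
    · have : ∀ a : MulAction.fixedPoints H X, ((a : X) : Finset H) = ∅ := by
        rintro ⟨⟨S, hS⟩, hfix⟩
        by_contra hne
        obtain ⟨h, hh⟩ := Finset.nonempty_iff_ne_empty.2 hne
        apply huniv
        have : S = Finset.univ := by
          rw [Finset.eq_univ_iff_forall]
          intro h'
          have h2 := hfix (h' * h⁻¹)
          have h3 : (h' * h⁻¹) • S = S := congrArg Subtype.val h2
          rw [← h3, Finset.mem_smul_finset]
          exact ⟨h, hh, by simp⟩
        rw [← this]; exact hS
      intro a b
      apply Subtype.ext; apply Subtype.ext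
      rw [this a, this b]
    · intro g
      apply Subtype.ext
      change g • (∅ : Finset H) = ∅
      simp
  rw [c1] at key
  have c2 : Nat.card X = (Finset.filter (fun S => Odd (f S)) (Finset.univ : Finset H).powerset).card := by
    rw [← Nat.card_eq_finsetCard]
    apply Nat.card_congr
    refine Equiv.subtypeEquivRight ?_
    intro S
    simp only [Finset.powerset_univ, Finset.mem_filter, Finset.mem_univ, true_and]
    rfl
  have : Odd (Nat.card X) := by
    rw [Nat.odd_iff]; exact key
  rw [c2, ← Finset.odd_sum_iff_odd_card_odd] at this
  exact (Nat.not_odd_iff_even.2 hsum) this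

open scoped Pointwise in
theorem core {k L H : Type*} [Field k] [Field L] [Algebra k L] [CharZero k] [CharZero L]
    [Group H] [Fintype H] [DecidableEq H] (hH : IsPGroup 2 H)
    (t : L →+* L) (htt : ∀ z, t (t z) = z) (cj : k →+* k)
    (htk : ∀ c, t (algebraMap k L c) = algebraMap k L (cj c)) (σ : k →+* ℂ)
    (hσ : ∀ c, σ (cj c) = star (σ c)) (I : k) (hI : I ^ 2 = -1)
    (htI : t (algebraMap k L I) = - algebraMap k L I)
    (φ : H → L ≃+* L) (φ0 : H → k ≃+* k) 
    (hφ : ∀ h c, φ h (algebraMap k L c) = algebraMap k L (φ0 h c))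
    (x y : H → L) (hφx : ∀ g h, φ g (x h) = x (g * h)) (hφy : ∀ g h, φ g (y h) = y (g * h))
    (hx : AlgebraicIndependent k x) (hxtop : adjoin k (Set.range x) = ⊤)
    (hxt : ∀ h, x h * t (x h) = -1) (hyt : ∀ h, y h * t (y h) = -1) :
    AlgebraicIndependent k y := by
  by_cases h1 : x 1 = y 1
  · have : x = y := by
      ext h
      have e1 := hφx h 1
      have e2 := hφy h 1
      rw [mul_one] at e1 e2
      rw [← e1, ← e2, h1]
    rw [← this]; exact hx
  have hxy : ∀ h, x h ≠ y h := by
    intro h hh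
    apply h1
    have e1 := hφx h⁻¹ h
    have e2 := hφy h⁻¹ h
    rw [inv_mul_cancel] at e1 e2
    rw [← e1, ← e2, hh]
  obtain ⟨w, hw, hsum⟩ := expansion I hI t htI x y hx hxy hxt hyt Finset.univ
  have hm1 : ∀ S, mix x y w Finset.univ S = w := by intro S; ext h; simp [mix]
  simp only [Finset.compl_univ, Finset.powerset_empty, Finset.sum_singleton, hm1] at hsum
  have heven := degOver_even t htt cj htk σ hσ I hI htI x hx w (fun h => hw h (Finset.mem_univ h)) 
    (x 1) (hxt 1)
  rw [← hsum] at heven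
  have hodd := parity_fixed hH (fun S => degOver k (Set.range (mix x y w ∅ S))) (by
    intro g S
    rw [← degOver_map (φ g) (φ0 g) (hφ g) (Set.range (mix x y w ∅ S))]
    congr 1
    rw [← Set.range_comp]
    have : (φ g) ∘ mix x y w ∅ S = mix x y w ∅ (g • S) ∘ (Equiv.mulLeft g) := by
      ext h
      have hiff : g * h ∈ g • S ↔ h ∈ S := by
        rw [← smul_eq_mul, Finset.smul_mem_smul_finset_iff]
      simp only [Function.comp, mix, Finset.notMem_empty, if_false, Equiv.coe_mulLeft, hiff]
      split_ifs
      · exact hφy g h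
      · exact hφx g h
    rw [this, (Equiv.mulLeft g).surjective.range_comp]) heven (by
      have : mix x y w ∅ ∅ = x := by ext h; simp [mix]
      simp only [this]
      unfold degOver
      rw [hxtop]
      rw [IntermediateField.finrank_top]
      exact odd_one)
  have hm2 : mix x y w ∅ Finset.univ = y := by ext h; simp [mix]
  simp only [hm2] at hodd
  exact algIndep_of_degOver x hx y hodd.pos.ne'

end Part6

section Part7
open IntermediateField

theorem construct_L {k Γ : Type} [Field k] [Group Γ] [Fintype Γ] [MulSemiringAction Γ k]
    (H : Subgroup Γ) (τ : Γ) (hτ2 : τ * τ = 1) (hτc : ∀ γ, γ * τ = τ * γ)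
    (hH : ∀ γ, γ ∈ H ↔ γ * τ ∉ H) :
    ∃ (L : Type) (_ : Field L) (_ : Algebra k L) (_ : MulSemiringAction Γ L) (x : H → L),
      (∀ (γ : Γ) (c : k), γ • algebraMap k L c = algebraMap k L (γ • c)) ∧
      AlgebraicIndependent k x ∧ adjoin k (Set.range x) = ⊤ ∧
      (∀ g h : H, (g : Γ) • x h = x (g * h)) ∧ (∀ h : H, τ • x h = - (x h)⁻¹) := by
  classical
  let R := MvPolynomial H k
  let L := FractionRing R
  let x : H → L := fun h => algebraMap R L (MvPolynomial.X h)
  have hae : ∀ p : R, MvPolynomial.aeval x p = algebraMap R L p := by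
    intro p
    have : (MvPolynomial.aeval x : R →ₐ[k] L) = IsScalarTower.toAlgHom k R L := by
      ext h; rw [MvPolynomial.aeval_X]; rfl
    rw [this]; rfl
  have hx : AlgebraicIndependent k x := by
    rw [algebraicIndependent_iff]
    intro p hp
    rw [hae] at hp
    exact (IsFractionRing.to_map_eq_zero_iff).1 hp
  have hx0 : ∀ h, x h ≠ 0 := fun h => hx.ne_zero h
  have hxtop : adjoin k (Set.range x) = ⊤ := by
    rw [eq_top_iff]
    intro z _
    rw [mem_adjoin_range_iff]
    obtain ⟨p, q, _, rfl⟩ := IsFractionRing.div_surjective (A := R) z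
    exact ⟨p, q, by rw [hae, hae]⟩
  have hm : ∀ γ, γ ∉ H → γ * τ ∈ H := by
    intro γ h; by_contra h'; exact h ((hH γ).2 h')
  let X : Γ → L := fun γ => if h : γ ∈ H then x ⟨γ, h⟩ else -(x ⟨γ * τ, hm γ h⟩)⁻¹
  have hXH : ∀ h : H, X h = x h := by intro h; simp [X]
  have hXτ : ∀ γ, X (γ * τ) = - (X γ)⁻¹ := by
    intro γ
    by_cases h : γ ∈ H
    · have h' := (hH γ).1 h
      simp only [X, dif_pos h, dif_neg h']
      congr 3
      apply Subtype.ext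
      change γ * τ * τ = γ
      rw [mul_assoc, hτ2, mul_one]
    · simp only [X, dif_neg h, dif_pos (hm γ h)]
      rw [inv_neg, inv_inv, neg_neg]
  have hX : ∀ γ, AlgebraicIndependent k (fun h : H => X (γ * h)) := by
    intro γ
    apply algIndep_of_degOver x hx
    have htop : adjoin k (Set.range (fun h : H => X (γ * h))) = ⊤ := by
      rw [eq_top_iff, ← hxtop, adjoin_le_iff]
      rintro _ ⟨h, rfl⟩
      by_cases hh : γ⁻¹ * h ∈ H
      · apply subset_adjoin
        refine ⟨⟨_, hh⟩, ?_⟩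
        simp [hXH]
      · have h1 : X (γ * (⟨γ⁻¹ * h * τ, hm _ hh⟩ : H)) ∈ 
            adjoin k (Set.range (fun h : H => X (γ * h))) := subset_adjoin _ _ ⟨_, rfl⟩
        have h2 : γ * (⟨γ⁻¹ * h * τ, hm _ hh⟩ : H) = (h : Γ) * τ := by simp [mul_assoc]
        rw [h2, hXτ, hXH] at h1
        have h3 := neg_mem (inv_mem h1)
        rw [inv_neg, neg_neg, inv_inv] at h3; exact h3
    unfold degOver
    rw [htop, IntermediateField.finrank_top]
    exact one_ne_zero
  let f : Γ → (R →+* L) := fun γ => MvPolynomial.eval₂Hom 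
    ((algebraMap k L).comp (MulSemiringAction.toRingHom Γ k γ)) (fun h => X (γ * h))
  have hfC : ∀ γ c, f γ (MvPolynomial.C c) = algebraMap k L (γ • c) := by
    intro γ c; exact MvPolynomial.eval₂Hom_C _ _ _
  have hfX : ∀ γ h, f γ (MvPolynomial.X h) = X (γ * h) := by
    intro γ h; exact MvPolynomial.eval₂Hom_X' _ _ _
  have hinj : ∀ γ, Function.Injective (f γ) := by
    intro γ
    have e : ∀ p, f γ p = MvPolynomial.aeval (fun h : H => X (γ * h)) 
        (MvPolynomial.map (MulSemiringAction.toRingHom Γ k γ) p) := by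
      intro p
      rw [MvPolynomial.aeval_def, MvPolynomial.eval₂_map]
      rfl
    rw [injective_iff_map_eq_zero]
    intro p hp
    rw [e] at hp
    have := (algebraicIndependent_iff.1 (hX γ)) _ hp
    exact (MvPolynomial.map_injective _ (MulSemiringAction.toRingHom Γ k γ).injective) 
      (by rw [this, map_zero])
  let φ : Γ → (L →+* L) := fun γ => IsFractionRing.lift (hinj γ)
  have hφR : ∀ γ p, φ γ (algebraMap R L p) = f γ p := fun γ p => IsFractionRing.lift_algebraMap _ _
  have hφk : ∀ γ c, φ γ (algebraMap k L c) = algebraMap k L (γ • c) := by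
    intro γ c
    rw [IsScalarTower.algebraMap_apply k R L, hφR]
    exact hfC γ c
  have hφx : ∀ γ h, φ γ (x h) = X (γ * h) := fun γ h => (hφR _ _).trans (hfX γ h)
  have hφX : ∀ γ δ, φ γ (X δ) = X (γ * δ) := by
    intro γ δ
    by_cases h : δ ∈ H
    · have := hφx γ ⟨δ, h⟩
      rwa [← hXH] at this
    · have h1 := hφx γ ⟨δ * τ, hm δ h⟩
      rw [← hXH] at h1
      change φ γ (X (δ * τ)) = X (γ * (δ * τ)) at h1
      rw [← mul_assoc, hXτ, hXτ, map_neg, map_inv₀] at h1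
      exact inv_injective (neg_injective h1)
  have hext : ∀ a b : L →+* L, (∀ c, a (algebraMap k L c) = b (algebraMap k L c)) → 
      (∀ h, a (x h) = b (x h)) → a = b := by
    intro a b h1 h2
    apply IsLocalization.ringHom_ext (nonZeroDivisors R)
    apply MvPolynomial.ringHom_ext
    · intro c
      have := h1 c
      rw [IsScalarTower.algebraMap_apply k R L] at this
      exact this
    · intro h; exact h2 h
  have h1 : φ 1 = RingHom.id L := by
    apply hext
    · intro c; rw [hφk]; simp
    · intro h; rw [hφx, one_mul, hXH]; rfl
  have hmul : ∀ γ δ, φ (γ * δ) = (φ γ).comp (φ δ) := by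
    intro γ δ
    apply hext
    · intro c; rw [RingHom.comp_apply, hφk, hφk, hφk, mul_smul]
    · intro h; rw [RingHom.comp_apply, hφx, hφx, hφX, mul_assoc]
  refine ⟨L, inferInstance, inferInstance, 
    { smul := fun γ z => φ γ z
      one_smul := fun z => by change φ 1 z = z; rw [h1]; rfl
      mul_smul := fun γ δ z => by change φ (γ * δ) z = φ γ (φ δ z); rw [hmul]; rfl
      smul_zero := fun γ => map_zero (φ γ)
      smul_add := fun γ => map_add (φ γ)
      smul_one := fun γ => map_one (φ γ)
      smul_mul := fun γ => map_mul (φ γ) }, x, hφk, hx, hxtop, ?_, ?_⟩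
  · intro g h
    change φ g (x h) = _
    rw [hφx, ← hXH]; rfl
  · intro h
    change φ τ (x h) = _
    rw [hφx, ← hτc, hXτ, hXH]

end Part7

section QuatRep
open QuaternionGroup

theorem quatHom {K L : Type*} [Field K] [Field L] [Algebra K L] (m : ℕ)
    (z : AddChar (ZMod (2 * m)) L) (hz : z (m : ZMod (2 * m)) = -1) (t : L →ₐ[K] L)
    (htt : ∀ v, t (t v) = v) (htz : ∀ i, t (z i) = z (-i)) (x : L) (hx : x * t x = -1) :
    ∃ f : QuaternionGroup m →* (L →ₗ[K] L),
      (∀ i v, f (a i) v = z i * v) ∧ (∀ i v, f (xa i) v = x * t (z i * v)) := by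
  let F : QuaternionGroup m → (L →ₗ[K] L) := fun g => match g with
    | a i => LinearMap.mulLeft K (z i)
    | xa i => (LinearMap.mulLeft K x) ∘ₗ t.toLinearMap ∘ₗ (LinearMap.mulLeft K (z i))
  have hFa : ∀ i v, F (a i) v = z i * v := fun i v => rfl
  have hFx : ∀ i v, F (xa i) v = x * t (z i * v) := fun i v => rfl
  refine ⟨⟨⟨F, ?_⟩, ?_⟩, hFa, hFx⟩
  · ext v
    rw [QuaternionGroup.one_def, hFa, AddChar.map_zero_eq_one, one_mul]; rfl
  · rintro (i | i) (j | j)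
    · ext v
      rw [Module.End.mul_apply, a_mul_a, hFa, hFa, hFa, AddChar.map_add_eq_mul, mul_assoc]
    · ext v
      rw [Module.End.mul_apply, a_mul_xa, hFa, hFx, hFx, sub_eq_add_neg, AddChar.map_add_eq_mul]
      simp only [map_mul, htz, neg_neg]
      ring
    · ext v
      rw [Module.End.mul_apply, xa_mul_a, hFa, hFx, hFx, AddChar.map_add_eq_mul, mul_assoc]
    · ext v
      rw [Module.End.mul_apply, xa_mul_xa, hFa, hFx, hFx, sub_eq_add_neg, AddChar.map_add_eq_mul,
        AddChar.map_add_eq_mul, hz]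
      simp only [map_mul, htz, neg_neg, htt]
      linear_combination (- z (-i) * z j * v) * hx

theorem quat_isPGroup (l : ℕ) : IsPGroup 2 (QuaternionGroup (2 ^ (l + 1))) := by
  have : NeZero (2 ^ (l + 1)) := ⟨by positivity⟩
  apply IsPGroup.of_card (n := l + 3)
  rw [Nat.card_eq_fintype_card, QuaternionGroup.card]
  ring

theorem trace_anticomm {K L : Type*} [Field K] [CharZero K] [Field L] [Algebra K L]
    (T J : L →ₗ[K] L) (hJ : ∀ v, J (J v) = - v) (hTJ : ∀ v, T (J v) = - J (T v)) :
    LinearMap.trace K L T = 0 := by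
  have h1 : T = J * (T * J) := by
    ext v
    rw [Module.End.mul_apply, Module.End.mul_apply, hTJ, map_neg, hJ, neg_neg]
  have h3 : (T * J) * J = (-1 : K) • T := by
    ext v
    rw [Module.End.mul_apply, Module.End.mul_apply, hJ, map_neg, LinearMap.smul_apply, neg_smul,
      one_smul]
  have h2 : LinearMap.trace K L (J * (T * J)) = - LinearMap.trace K L T := by
    rw [LinearMap.trace_mul_comm, h3, map_smul, neg_smul, one_smul]
  rw [← h1] at h2
  exact self_eq_neg.1 h2

theorem trdegEq_top {k K : Type} [Field k] [Field K] [Algebra k K] (n : ℕ)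
    (h : Algebra.trdeg k K = n) : TrdegEq (⊤ : IntermediateField k K) n := by
  have e : Algebra.trdeg k (⊤ : IntermediateField k K) = n := by
    rw [← h]; exact (IntermediateField.topEquiv (F := k) (E := K)).trdeg_eq
  constructor
  · intro s hs
    have := hs.cardinalMk_le_trdeg
    rw [e] at this
    simpa using this
  · obtain ⟨s, hs⟩ := exists_isTranscendenceBasis k (⊤ : IntermediateField k K)
    have h1 := hs.cardinalMk_eq_trdeg
    rw [e] at h1
    have hfin : s.Finite := by
      rw [← Set.finite_coe_iff, ← Cardinal.lt_aleph0_iff_finite, h1]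
      exact Cardinal.natCast_lt_aleph0
    refine ⟨hfin.toFinset, ?_, ?_⟩
    · have := hs.1
      let ee : {y // y ∈ hfin.toFinset} ≃ s := Equiv.subtypeEquivRight (by simp)
      exact (this.comp ee ee.injective)
    · rw [← Set.ncard_eq_toFinset_card s hfin, ← Nat.card_coe_set_eq, Nat.card, h1]; simp

end QuatRep

section Build
open QuaternionGroup

/-- Matrix form of a representation by endomorphisms. -/
theorem exists_matrix_rep {K L G : Type*} [Field K] [Field L] [Algebra K L] [Group G] {m : ℕ}
    (f : G →* (L →ₗ[K] L)) (b : Module.Basis (Fin m) K L) :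
    ∃ ρ : G →* GL (Fin m) K, ∀ g, (ρ g : Matrix (Fin m) (Fin m) K) = LinearMap.toMatrix b b (f g) := by
  refine ⟨((LinearMap.toMatrixAlgEquiv b).toAlgHom.toRingHom.toMonoidHom.comp f).toHomUnits, ?_⟩
  intro g
  rfl

theorem rep_irred {K L G : Type*} [Field K] [Field L] [Algebra K L] [Group G] {m : ℕ}
    (hm : 0 < m)
    (f : G →* (L →ₗ[K] L)) (b : Module.Basis (Fin m) K L) (ρ : G →* GL (Fin m) K)
    (hρ : ∀ g, (ρ g : Matrix (Fin m) (Fin m) K) = LinearMap.toMatrix b b (f g))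
    (ζ : L) (hζ : Algebra.adjoin K {ζ} = ⊤) (g₀ : G) (hg₀ : ∀ v, f g₀ v = ζ * v) :
    IsIrreducibleRep ρ := by
  refine ⟨hm, fun W hW => ?_⟩
  let W' : Submodule K L := W.comap b.equivFun.toLinearMap
  have hWW' : ∀ v : L, v ∈ W' ↔ b.equivFun v ∈ W := fun v => Iff.rfl
  have h1 : ∀ v ∈ W', ζ * v ∈ W' := by
    intro v hv
    have := hW g₀ _ hv
    rw [hρ] at this
    rw [hWW', ← hg₀]
    have e := LinearMap.toMatrix_mulVec_repr b b (f g₀) v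
    change (LinearMap.toMatrix b b (f g₀)).mulVec (b.repr v) ∈ W at this
    rw [e] at this
    exact this
  have h2 : ∀ c : L, ∀ v ∈ W', c * v ∈ W' := by
    intro c
    have hc : c ∈ Algebra.adjoin K {ζ} := by rw [hζ]; trivial
    induction hc using Algebra.adjoin_induction with
    | mem y hy => rw [Set.mem_singleton_iff] at hy; subst hy; exact h1
    | algebraMap r => intro v hv; rw [← Algebra.smul_def]; exact W'.smul_mem r hv
    | add y z _ _ hy hz => intro v hv; rw [add_mul]; exact W'.add_mem (hy v hv) (hz v hv)
    | mul y z _ _ hy hz => intro v hv; rw [mul_assoc]; exact hy _ (hz v hv)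
  by_cases h : ∃ v ∈ W', v ≠ 0
  · right
    obtain ⟨v, hv, hv0⟩ := h
    rw [eq_top_iff]
    intro w _
    have := h2 (b.equivFun.symm w * v⁻¹) v hv
    rw [mul_assoc, inv_mul_cancel₀ hv0, mul_one, hWW', LinearEquiv.apply_symm_apply] at this
    exact this
  · left
    push Not at h
    rw [eq_bot_iff]
    intro w hw
    have := h (b.equivFun.symm w) (by
      rw [hWW', LinearEquiv.apply_symm_apply]; exact hw)
    exact b.equivFun.symm.map_eq_zero_iff.1 this

theorem descends_top {k K G : Type*} [Field k] [Field K] [Algebra k K] [Group G] {n : ℕ}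
    (ρ : G →* GL (Fin n) K) : Descends ρ (⊤ : IntermediateField k K) := by
  refine ⟨(Units.map ((IntermediateField.topEquiv (F := k) (E := K)).symm.toAlgHom.toRingHom.mapMatrix).toMonoidHom).comp ρ,
    1, fun g => ?_⟩
  ext i j
  simp

theorem descent_elt {k K L G : Type*} [Field k] [Field K] [Field L] [Algebra k K] [Algebra K L]
    [Group G] {m : ℕ} (hm : 0 < m)
    (f : G →* (L →ₗ[K] L)) (b : Module.Basis (Fin m) K L) (ρ : G →* GL (Fin m) K)
    (hρ : ∀ g, (ρ g : Matrix (Fin m) (Fin m) K) = LinearMap.toMatrix b b (f g))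
    (ζ : L) (hζ : LinearIndependent K (fun j : Fin m => ζ ^ (j : ℕ))) (g₀ : G)
    (hg₀ : ∀ v, f g₀ v = ζ * v) (K₀ : IntermediateField k K) (hd : Descends ρ K₀) :
    ∃ v : L, v ≠ 0 ∧ ∀ g : G, ∃ c : Fin m → K₀,
      f g v = (∑ j, algebraMap K L (c j : K) * ζ ^ (j : ℕ)) * v := by
  obtain ⟨ρ', M, hM⟩ := hd
  let o : Fin m := ⟨0, hm⟩
  let ι : (Fin m → K₀) → (Fin m → K) := fun w i => (w i : K)
  let Φ : (Fin m → K) →ₗ[K] L := b.equivFun.symm.toLinearMap ∘ₗ (M : Matrix (Fin m) (Fin m) K).mulVecLin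
  have hΦ : Function.Injective Φ := by
    intro u v huv
    have h1 : (M : Matrix (Fin m) (Fin m) K).mulVec u = (M : Matrix (Fin m) (Fin m) K).mulVec v :=
      b.equivFun.symm.injective huv
    have h2 := congrArg (fun w => ((M⁻¹ : GL (Fin m) K) : Matrix (Fin m) (Fin m) K).mulVec w) h1
    simpa [Matrix.mulVec_mulVec] using h2
  let w : G → (Fin m → K₀) := fun g i => (ρ' g : Matrix (Fin m) (Fin m) K₀) i o
  let v : L := Φ (Pi.single o 1)
  have hv0 : v ≠ 0 := by
    intro h
    have := hΦ (h.trans (map_zero Φ).symm)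
    have := congrFun this o
    simp at this
  have key : ∀ g, f g v = Φ (ι (w g)) := by
    intro g
    have h1 : (ρ g : Matrix (Fin m) (Fin m) K) * M =
        M * (ρ' g : Matrix (Fin m) (Fin m) K₀).map (algebraMap K₀ K) := by
      have := congrArg (fun u : GL (Fin m) K => (u : Matrix (Fin m) (Fin m) K))
        (show ρ g * M = M * Units.map ((algebraMap K₀ K).mapMatrix).toMonoidHom (ρ' g) by
          rw [hM g, inv_mul_cancel_right])
      simpa using this
    have h2 : b.equivFun (f g v) = (ρ g : Matrix (Fin m) (Fin m) K).mulVec (b.equivFun v) := by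
      rw [hρ]
      exact (LinearMap.toMatrix_mulVec_repr b b (f g) v).symm
    have h3 : b.equivFun v = (M : Matrix (Fin m) (Fin m) K).mulVec (Pi.single o 1) := by
      exact b.equivFun.apply_symm_apply _
    apply b.equivFun.injective
    rw [h2, h3, Matrix.mulVec_mulVec, h1, ← Matrix.mulVec_mulVec]
    have h4 : ((ρ' g : Matrix (Fin m) (Fin m) K₀).map (algebraMap K₀ K)).mulVec (Pi.single o 1)
        = ι (w g) := by
      ext i
      simp [ι, w]
    rw [h4]
    exact (b.equivFun.apply_symm_apply _).symm
  have hpow : ∀ (j : ℕ) u, f (g₀ ^ j) u = ζ ^ j * u := by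
    intro j
    induction j with
    | zero => intro u; simp
    | succ j ih => 
      intro u; rw [pow_succ, map_mul, Module.End.mul_apply, hg₀, ih, pow_succ, mul_assoc]
  have hsum : ∀ c : Fin m → K₀, Φ (ι (∑ j : Fin m, c j • w (g₀ ^ (j : ℕ)))) =
      (∑ j, algebraMap K L (c j : K) * ζ ^ (j : ℕ)) * v := by
    intro c
    have e : ι (∑ j : Fin m, c j • w (g₀ ^ (j : ℕ))) = 
        ∑ j : Fin m, (c j : K) • ι (w (g₀ ^ (j : ℕ))) := by
      ext i
      simp [ι]
    rw [e, map_sum, Finset.sum_mul]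
    apply Finset.sum_congr rfl
    intro j _
    rw [map_smul, ← key, hpow, Algebra.smul_def, mul_assoc]
  have hli : LinearIndependent K₀ (fun j : Fin m => w (g₀ ^ (j : ℕ))) := by
    rw [Fintype.linearIndependent_iff]
    intro c hc
    have h1 := hsum c
    have h0 : ι 0 = 0 := by ext i; simp [ι]
    rw [hc, h0, map_zero] at h1
    have h2 := (mul_eq_zero.1 h1.symm).resolve_right hv0
    rw [Fintype.linearIndependent_iff] at hζ
    intro i
    have := hζ (fun j => (c j : K)) (by simpa [Algebra.smul_def] using h2) i
    exact_mod_cast this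
  have : Nonempty (Fin m) := ⟨o⟩
  have hspan := hli.span_eq_top_of_card_eq_finrank (by simp)
  refine ⟨v, hv0, fun g => ?_⟩
  have hg : w g ∈ Submodule.span K₀ (Set.range (fun j : Fin m => w (g₀ ^ (j : ℕ)))) := by
    rw [hspan]; trivial
  obtain ⟨c, hc⟩ := (Submodule.mem_span_range_iff_exists_fun K₀).1 hg
  exact ⟨c, by rw [← hsum, hc, key]⟩

theorem build (l : ℕ) (K L : Type) [Field K] [CharZero K] [Field L] [Algebra K L] [Algebra ℚ K]
    (hfin : Module.finrank K L = 2 ^ (l + 1)) (ζ : L) (hζ : IsPrimitiveRoot ζ (2 * 2 ^ (l + 1)))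
    (htop : Algebra.adjoin K {ζ} = ⊤) (t : L →ₐ[K] L) (htt : ∀ v, t (t v) = v)
    (htζ : t ζ = ζ⁻¹) (x : L) (hx : x * t x = -1)
    (htr : ∀ j : ℕ, Algebra.trace K L (ζ ^ j) ∈ (algebraMap ℚ K).range)
    (htrd : Algebra.trdeg ℚ K = (2 ^ l : ℕ))
    (hlow : ∀ K₀ : IntermediateField ℚ K, ∀ y : L, y * t y = -1 →
      ∀ c : Fin (2 ^ (l + 1)) → K₀, y = ∑ j, algebraMap K L (c j : K) * ζ ^ (j : ℕ) →
      ¬ TrdegLT K₀ (2 ^ l)) : Nonempty (SchillingWitness l) := by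
  set m := 2 ^ (l + 1) with hmdef
  have hm0 : 0 < m := by positivity
  have : NeZero m := ⟨hm0.ne'⟩
  have : NeZero (2 * m) := ⟨by omega⟩
  have : FiniteDimensional K L := FiniteDimensional.of_finrank_pos (by omega)
  let z : AddChar (ZMod (2 * m)) L := AddChar.zmodChar (2 * m) hζ.pow_eq_one
  have hznat : ∀ j : ℕ, z (j : ZMod (2 * m)) = ζ ^ j := fun j => AddChar.zmodChar_apply' _ _
  have hzval : ∀ i, z i = ζ ^ (i.val) := fun i => AddChar.zmodChar_apply _ _
  have hζ0 : ζ ≠ 0 := hζ.ne_zero (by omega)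
  have hzm : z (m : ZMod (2 * m)) = -1 := by
    rw [hznat]
    have h2 : IsPrimitiveRoot (ζ ^ m) 2 := hζ.pow (by omega) (by ring)
    exact h2.eq_neg_one_of_two_right
  have htz : ∀ i, t (z i) = z (-i) := by
    intro i
    have : z (-i) * z i = 1 := by rw [← AddChar.map_add_eq_mul]; simp
    rw [eq_inv_of_mul_eq_one_left this, hzval, map_pow, htζ, inv_pow]
  obtain ⟨f, hfa, hfx⟩ := quatHom m z hzm t htt htz x hx
  let b := Module.finBasisOfFinrankEq K L hfin
  obtain ⟨ρ, hρ⟩ := exists_matrix_rep f b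
  have hg₀ : ∀ v, f (a 1) v = ζ * v := by
    intro v; rw [hfa]
    have := hznat 1
    rw [Nat.cast_one, pow_one] at this
    rw [this]
  have hli : LinearIndependent K (fun j : Fin m => ζ ^ (j : ℕ)) := by
    have hintegral : IsIntegral K ζ := IsIntegral.of_finite K ζ
    have hdeg : (minpoly K ζ).natDegree = m := by
      rw [← hfin, ← Field.primitive_element_iff_minpoly_natDegree_eq]
      rw [← IntermediateField.toSubalgebra_inj, 
        IntermediateField.adjoin_simple_toSubalgebra_of_isAlgebraic hintegral.isAlgebraic, htop]
      rfl
    have := linearIndependent_pow (K := K) ζ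
    rw [hdeg] at this
    exact this
  have htrace : ∀ g, repChar ρ g = LinearMap.trace K L (f g) := by
    intro g
    unfold repChar
    rw [hρ, ← LinearMap.trace_eq_matrix_trace]
  refine ⟨{ G := QuaternionGroup m
            K := K
            two_group := quat_isPGroup l
            n := m
            ρ := ρ
            irred := rep_irred hm0 f b ρ hρ ζ htop (a 1) hg₀
            char_rat := ?_
            descends_to_ed := ⟨⊤, descends_top ρ, trdegEq_top _ htrd⟩
            not_below_ed := ?_ }⟩
  · intro g
    rw [htrace]
    rcases g with i | i
    · have : f (a i) = Algebra.lmul K L (ζ ^ i.val) := by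
        ext v; rw [hfa, hzval]; rfl
      rw [this]
      exact htr _
    · have hI : (ζ ^ (2 ^ l)) ^ 2 = -1 := by
        rw [← hzm, hznat, ← pow_mul]; 
        congr 1
      have htI : t (ζ ^ (2 ^ l)) = - ζ ^ (2 ^ l) := by
        rw [map_pow, htζ, inv_pow]
        rw [inv_eq_iff_eq_inv, eq_comm]
        apply inv_eq_of_mul_eq_one_left
        linear_combination - hI
      have : LinearMap.trace K L (f (xa i)) = 0 := by
        apply trace_anticomm _ (LinearMap.mulLeft K (ζ ^ (2 ^ l)))
        · intro v; simp only [LinearMap.mulLeft_apply]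
          linear_combination v * hI
        · intro v; simp only [LinearMap.mulLeft_apply, hfx, map_mul, htI]
          ring
      rw [this]
      exact zero_mem _
  · intro K₀ hlt hd
    obtain ⟨v, hv0, hv⟩ := descent_elt hm0 f b ρ hρ ζ hli (a 1) hg₀ K₀ hd
    obtain ⟨c, hc⟩ := hv (xa 0)
    refine hlow K₀ _ ?_ c rfl hlt
    set y := ∑ j, algebraMap K L (c j : K) * ζ ^ (j : ℕ) with hy
    rw [hfx, AddChar.map_zero_eq_one, one_mul] at hc
    have h1 := congrArg t hc
    simp only [map_mul, htt] at h1
    have htv0 : t v ≠ 0 := by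
      intro h; apply hv0; rw [← htt v, h, map_zero]
    apply mul_right_cancel₀ (mul_ne_zero hv0 htv0)
    linear_combination (-t x * v) * hc - (y * v) * h1 + (v * t v) * hx

end Build

theorem exists_cyc (l : ℕ) : ∃ (k : Type) (_ : Field k) (_ : CharZero k) (Γ : Type) (_ : Group Γ)
    (_ : Fintype Γ) (_ : MulSemiringAction Γ k) (ζ : k) (τ : Γ),
    IsPrimitiveRoot ζ (2 * 2 ^ (l + 1)) ∧ Fintype.card Γ = 2 ^ (l + 1) ∧
    (∀ γ : Γ, γ • ζ = ζ → γ = 1) ∧ τ • ζ = ζ⁻¹ ∧ 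
    (∀ c : k, (∀ γ : Γ, γ • c = c) → ∃ q : ℚ, c = q) ∧ Algebra.IsAlgebraic ℚ k ∧
    ∃ σ : k →+* ℂ, ∀ c, σ (τ • c) = star (σ c) := by
  set N := 2 * 2 ^ (l + 1) with hN
  have : NeZero N := ⟨by positivity⟩
  let k := CyclotomicField N ℚ
  have hcyc : IsCyclotomicExtension {N} ℚ k := by
    have := CyclotomicField.isCyclotomicExtension N ℚ
    convert this using 1
    · rfl
    exact Subsingleton.elim (α := Algebra ℚ k) _ _
  let ζ : k := IsCyclotomicExtension.zeta N ℚ k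
  have hζ : IsPrimitiveRoot ζ N := IsCyclotomicExtension.zeta_spec N ℚ k
  have hirr : Irreducible (Polynomial.cyclotomic N ℚ) := 
    Polynomial.cyclotomic.irreducible_rat (Nat.pos_of_neZero N)
  have hgal : IsGalois ℚ k := IsCyclotomicExtension.isGalois {N} ℚ k
  have hfd : FiniteDimensional ℚ k := IsCyclotomicExtension.finiteDimensional {N} ℚ k
  let τ : k ≃ₐ[ℚ] k := IsCyclotomicExtension.fromZetaAut hζ.inv hirr
  have hτ : τ ζ = ζ⁻¹ := IsCyclotomicExtension.fromZetaAut_spec hζ.inv hirr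
  let pb := hζ.powerBasis ℚ
  have hpb : pb.gen = ζ := hζ.powerBasis_gen ℚ
  obtain ⟨σ⟩ : Nonempty (k →ₐ[ℚ] ℂ) := ⟨IsAlgClosed.lift⟩
  refine ⟨k, inferInstance, inferInstance, k ≃ₐ[ℚ] k, inferInstance, inferInstance, 
    inferInstance, ζ, τ, hζ, ?_, ?_, hτ, ?_, ?_, σ, ?_⟩
  · rw [← Nat.card_eq_fintype_card, IsGalois.card_aut_eq_finrank, IsCyclotomicExtension.finrank k hirr,
      hN, ← pow_succ', Nat.totient_prime_pow_succ Nat.prime_two]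
    simp
  · intro γ hγ
    apply AlgEquiv.coe_toAlgHom_injective
    apply pb.algHom_ext
    rw [hpb]; exact hγ
  · intro c hc
    obtain ⟨q, hq⟩ := IntermediateField.mem_bot.1 ((IsGalois.mem_bot_iff_fixed (F := ℚ) c).2 hc)
    exact ⟨q, by rw [← hq]; simp⟩
  · exact inferInstance
  · intro c
    have : (σ.comp (τ : k →ₐ[ℚ] k)) = 
       ((starRingEnd ℂ).toRatAlgHom.comp σ) := by
      apply pb.algHom_ext
      rw [hpb]
      change σ (τ ζ) = star (σ ζ)
      rw [hτ, map_inv₀]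
      have h1 : IsPrimitiveRoot (σ ζ) N := hζ.map_of_injective σ.injective
      have h2 := h1.norm'_eq_one (NeZero.ne N)
      rw [Complex.inv_eq_conj h2]; rfl
    exact DFunLike.congr_fun this c

theorem not_trdegLT {F K L ι : Type} [Field F] [Field K] [Field L] [Algebra F K] [Algebra K L]
    [Algebra F L] [IsScalarTower F K L] [Fintype ι] (K₀ : IntermediateField F K) (n : ℕ)
    (hn : Fintype.card ι = n) (y : ι → L) (hy : AlgebraicIndependent F y)
    (hya : ∀ i, IsAlgebraic K₀ (y i)) : ¬ TrdegLT K₀ n := by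
  intro hlt
  let A := algebraicClosure K₀ L
  let y' : ι → A := fun i => ⟨y i, mem_algebraicClosure_iff.2 (hya i)⟩
  have hy' : AlgebraicIndependent F y' := by
    apply AlgebraicIndependent.of_comp (A.val.restrictScalars F)
    exact hy
  have h1 := hy'.cardinalMk_le_trdeg
  have h2 := trdeg_add_eq F K₀ (A := A)
  have h3 : Algebra.trdeg K₀ A = 0 := trdeg_eq_zero
  rw [h3, add_zero] at h2
  rw [← h2, Cardinal.mk_fintype, hn] at h1
  obtain ⟨s, hs⟩ := exists_isTranscendenceBasis F K₀
  rw [← hs.cardinalMk_eq_trdeg] at h1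
  obtain ⟨u, hu⟩ := Cardinal.exists_finset_le_card _ _ h1
  have h4 := hlt (u.map (Function.Embedding.subtype _)) ?_
  · rw [Finset.card_map] at h4
    omega
  · have hsub : ((u.map (Function.Embedding.subtype (· ∈ s)) : Finset K₀) : Set K₀) ⊆ s := by
      intro v hv
      obtain ⟨w, _, rfl⟩ := Finset.mem_map.1 (Finset.mem_coe.1 hv)
      exact w.2
    exact hs.1.mono hsub

section Final
open IntermediateField

theorem witness_aux (l : ℕ) : Nonempty (SchillingWitness l) := by
  classical
  obtain ⟨k, _, _, Γ, _, _, _, ζ, τ, hζ, hcard, hfaith, hτ, hfix, halg, σ, hσ⟩ := exists_cyc l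
  set m := 2 ^ (l + 1) with hm
  have hm0 : 0 < m := by positivity
  have : NeZero (2 * m) := ⟨by omega⟩
  have hζ0 : ζ ≠ 0 := hζ.ne_zero (by omega)
  -- the action is by powers
  have hpow : ∀ γ : Γ, ∃ i : ℕ, γ • ζ = ζ ^ i := by
    intro γ
    obtain ⟨i, _, hi⟩ := hζ.eq_pow_of_pow_eq_one (ξ := γ • ζ) (by
      rw [← smul_pow', hζ.pow_eq_one, smul_one])
    exact ⟨i, hi.symm⟩
  have hinj : ∀ γ δ : Γ, γ • ζ = δ • ζ → γ = δ := by
    intro γ δ h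
    have := hfaith (δ⁻¹ * γ) (by rw [mul_smul, h, inv_smul_smul])
    exact (inv_mul_eq_one.1 this).symm
  have hcomm : ∀ γ δ : Γ, γ * δ = δ * γ := by
    intro γ δ
    apply hinj
    obtain ⟨i, hi⟩ := hpow γ
    obtain ⟨j, hj⟩ := hpow δ
    rw [mul_smul, mul_smul, hj, hi, smul_pow', smul_pow', hi, hj, ← pow_mul, ← pow_mul, mul_comm]
  have hτ2 : τ * τ = 1 := by
    apply hfaith
    rw [mul_smul, hτ, smul_inv'', hτ, inv_inv]
  let I : k := ζ ^ (2 ^ l)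
  have hI : I ^ 2 = -1 := by
    have h2 : IsPrimitiveRoot (ζ ^ m) 2 := hζ.pow (by omega) (by ring)
    rw [← h2.eq_neg_one_of_two_right, ← pow_mul, hm, pow_succ]
  have hI0 : I ≠ 0 := pow_ne_zero _ hζ0
  have hInv : I⁻¹ = - I := by
    apply inv_eq_of_mul_eq_one_right
    linear_combination - hI
  have hII : I ≠ - I := fun h => hI0 (self_eq_neg.1 h)
  have hτI : τ • I = - I := by
    change τ • (ζ ^ (2 ^ l)) = _
    rw [smul_pow', hτ, inv_pow]; exact hInv
  have hpm : ∀ γ : Γ, γ • I = I ∨ γ • I = - I := by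
    intro γ
    apply sq_eq_sq_iff_eq_or_eq_neg.1
    rw [← smul_pow', hI, smul_neg, smul_one]
  let H : Subgroup Γ := MulAction.stabilizer Γ I
  have hmemH : ∀ γ, γ ∈ H ↔ γ • I = I := fun γ => MulAction.mem_stabilizer_iff
  have hH : ∀ γ, γ ∈ H ↔ γ * τ ∉ H := by
    intro γ
    rw [hmemH, hmemH, mul_smul, hτI, smul_neg]
    rcases hpm γ with h | h
    · rw [h]; exact ⟨fun _ h' => hII h'.symm, fun _ => rfl⟩
    · rw [h, neg_neg]; exact ⟨fun h' => absurd h'.symm hII, fun h' => absurd rfl h'⟩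
  have hcardH : Fintype.card H = 2 ^ l := by
    have h1 : H.index = 2 := by
      rw [Subgroup.index_eq_two_iff]
      refine ⟨τ, fun b => ?_⟩
      by_cases hb : b ∈ H
      · exact Or.inr ⟨hb, (hH b).1 hb⟩
      · exact Or.inl ⟨by by_contra h; exact hb ((hH b).2 h), hb⟩
    have h2 := H.card_mul_index
    rw [h1, Nat.card_eq_fintype_card, Nat.card_eq_fintype_card, hcard, hm, pow_succ] at h2
    omega
  have hHp : IsPGroup 2 H := IsPGroup.of_card (n := l) (by rw [Nat.card_eq_fintype_card, hcardH])
  obtain ⟨L, _, _, _, x, hcompat, hx, hxtop, hHx, hτx⟩ := 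
    construct_L (k := k) H τ hτ2 (fun γ => hcomm γ τ) hH
  have hchar : CharZero L := charZero_of_injective_algebraMap (algebraMap k L).injective
  let ζ' : L := algebraMap k L ζ
  have hζ' : IsPrimitiveRoot ζ' (2 * m) := hζ.map_of_injective (algebraMap k L).injective
  have hx0 : ∀ h, x h ≠ 0 := fun h => hx.ne_zero h
  have hfaithL : FaithfulSMul Γ L := ⟨fun {γ δ} h => by
    apply hinj
    have := h ζ'
    rw [hcompat, hcompat] at this
    exact (algebraMap k L).injective this⟩
  let K := FixedPoints.subfield Γ L
  have hfin : Module.finrank K L = m := (FixedPoints.finrank_eq_card Γ L).trans hcard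
  have : FiniteDimensional K L := FiniteDimensional.of_finrank_pos (by omega)
  have hKfix : ∀ (γ : Γ) (c : K), γ • (algebraMap K L c) = algebraMap K L c := fun γ c => c.2 γ
  have hgal : IsGalois K L := inferInstance
  have hcharK : CharZero K := inferInstance
  have htop : Algebra.adjoin K {ζ'} = ⊤ := by
    have h1 : K⟮ζ'⟯ = ⊤ := by
      rw [Field.primitive_element_iff_algHom_eq_of_eval' K L (fun z => hgal.to_normal.splits z)]
      intro φ ψ h
      obtain ⟨γ, rfl⟩ := (FixedPoints.toAlgHom_bijective Γ L).2 φ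
      obtain ⟨δ, rfl⟩ := (FixedPoints.toAlgHom_bijective Γ L).2 ψ
      have h' : γ • ζ' = δ • ζ' := h
      rw [hcompat, hcompat] at h'
      rw [hinj γ δ ((algebraMap k L).injective h')]
    rw [← IntermediateField.adjoin_simple_toSubalgebra_of_isAlgebraic
      (IsIntegral.of_finite K ζ').isAlgebraic, h1]
    rfl
  let t : L →ₐ[K] L := MulSemiringAction.toAlgHom K L τ
  have ht : ∀ v, t v = τ • v := fun v => rfl
  have htt : ∀ v, t (t v) = v := by
    intro v; rw [ht, ht, ← mul_smul, hτ2, one_smul]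
  have hxt : ∀ h, x h * t (x h) = -1 := by
    intro h; rw [ht, hτx, mul_neg, mul_inv_cancel₀ (hx0 h)]
  refine build l K L hfin ζ' hζ' htop t htt ?_ (x 1) (hxt 1) ?_ ?_ ?_
  · rw [ht, hcompat, hτ, map_inv₀]
  · intro j
    have h1 := trace_eq_sum_automorphisms (K := K) (ζ' ^ j)
    have h2 : ∀ s : L ≃ₐ[K] L, ∃ c : k, s (ζ' ^ j) = algebraMap k L c := by
      intro s
      obtain ⟨i, _, hi⟩ := hζ'.eq_pow_of_pow_eq_one (ξ := s ζ') (by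
        rw [← map_pow, hζ'.pow_eq_one, map_one])
      exact ⟨(ζ ^ i) ^ j, by rw [map_pow, ← hi, map_pow, map_pow]⟩
    choose c hc using h2
    simp only [hc, ← map_sum] at h1
    obtain ⟨q, hq⟩ := hfix (∑ s, c s) (by
      intro γ
      apply (algebraMap k L).injective
      rw [← hcompat, ← h1, hKfix])
    refine ⟨q, ?_⟩
    apply (algebraMap K L).injective
    rw [h1, hq]
    simp
  · have h1 : Algebra.trdeg k L = (2 ^ l : ℕ) := by
      have hb : IsTranscendenceBasis k x := by
        rw [hx.isTranscendenceBasis_iff_isAlgebraic]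
        rw [isAlg_adjoin_iff, hxtop]
        exact ⟨fun z => isAlgebraic_algebraMap (R := (⊤ : IntermediateField k L)) ⟨z, trivial⟩⟩
      rw [← hb.cardinalMk_eq_trdeg, Cardinal.mk_fintype, hcardH]
    have h2 := trdeg_add_eq ℚ k (A := L)
    have h3 := trdeg_add_eq ℚ K (A := L)
    rw [trdeg_eq_zero, h1, zero_add] at h2
    rw [trdeg_eq_zero (R := K), add_zero, ← h2] at h3
    exact h3
  · intro K₀ y hy c hc
    have hyind : AlgebraicIndependent k (fun h : H => (h : Γ) • y) := by
      refine core hHp t.toRingHom htt (MulSemiringAction.toRingHom Γ k τ) (hcompat τ) σ hσ I hI ?_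
        (fun h => MulSemiringAction.toRingEquiv Γ L (h : Γ)) 
        (fun h => MulSemiringAction.toRingEquiv Γ k (h : Γ)) (fun h c => hcompat h c) x _ hHx
        (fun g h => (mul_smul (g : Γ) (h : Γ) y).symm) hx hxtop hxt ?_
      · change τ • algebraMap k L I = _
        rw [hcompat, hτI, map_neg]
      · intro h
        change ((h : Γ) • y) * (τ • (h : Γ) • y) = -1
        rw [← mul_smul, ← hcomm, mul_smul, ← smul_mul']
        rw [ht] at hy
        rw [hy, smul_neg, smul_one]
    have hyQ := hyind.restrictScalars (R := ℚ) (algebraMap ℚ k).injective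
    refine not_trdegLT K₀ (2 ^ l) hcardH _ hyQ ?_
    intro h
    apply IsIntegral.isAlgebraic
    rw [hc, Finset.smul_sum]
    apply IsIntegral.sum
    intro j _
    rw [smul_mul', hKfix]
    apply IsIntegral.mul
    · exact isIntegral_algebraMap (R := K₀) (x := c j)
    · rw [smul_pow']
      apply IsIntegral.pow
      apply IsIntegral.of_pow (n := 2 * m) (by omega)
      rw [← smul_pow', hζ'.pow_eq_one, smul_one]
      exact isIntegral_one

end Final

/-- A variant of a theorem of Schilling: for every `l ≥ 0` there exist a finite `2`-group
`G`, a field extension `K/ℚ`, and a `K`-irreducible representation `ρ : G → GL_n(K)`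
with rational character whose essential dimension over `ℚ` equals `2^l`. -/
theorem exists_two_group_rep_with_ed_two_pow (l : ℕ) :
    Nonempty (SchillingWitness l) := by
  exact witness_aux l
end
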